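/- Suppose the Cayley graph Γ of a group G with finite generating set S simulates the grid ℤ², in the sense that there is a subshift of finite type on G whose configurations encode, via marked vertices and connecting patterns, a graph isomorphic to the Cayley graph of ℤ². Then the domino problem on G is undecidable. -/

import Mathlib

/-- A tileset `(m, Θ)` tiles the Cayley graph of `G` w.r.t. `Sf`. -/
def Tileable {G : Type*} [Group G] {s : ℕ} (Sf : Fin s → G)
    (m : ℕ) (Θ : List (ℕ × ℕ × ℕ)) : Prop :=
  ∃ a : G → ℕ, (∀ g : G, a g < m) ∧
    ∀ (g : G) (i : Fin s), (a g, (i : ℕ), a (g * Sf i)) ∈ Θ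

/-- Decidability of the domino problem of `G` with respect to `Sf`. -/
def DominoDecidable {G : Type*} [Group G] {s : ℕ} (Sf : Fin s → G) : Prop :=
  ∃ f : ℕ × List (ℕ × ℕ × ℕ) → Bool, Computable f ∧
    ∀ T : ℕ × List (ℕ × ℕ × ℕ), f T = true ↔ Tileable Sf T.1 T.2

/-- A configuration `a` is a solution of the tileset `(m, Θ)`. -/
def IsSolution {G : Type*} [Group G] {s : ℕ} (Sf : Fin s → G)
    (m : ℕ) (Θ : List (ℕ × ℕ × ℕ)) (a : G → ℕ) : Prop :=
  (∀ g : G, a g < m) ∧ ∀ (g : G) (i : Fin s), (a g, (i : ℕ), a (g * Sf i)) ∈ Θ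

/-- Slot `p.2` is an admissible (marked or unmarked) slot at vertex `p.1`:
marked slots are `1 ≤ i ≤ mk(colour)` and unmarked ones `-(uk(colour)) < i ≤ 0`. -/
def SlotOK {G : Type*} (mk uk : ℕ → ℕ) (a : G → ℕ) (p : G × ℤ) : Prop :=
  -(uk (a p.1) : ℤ) < p.2 ∧ p.2 ≤ (mk (a p.1) : ℤ)

/-- One hop along a Cayley edge, allowed by the local connection data `conn`
(which depends only on the two colours, the generator, and the two slots). -/
def Hop {G : Type*} [Group G] {s : ℕ} (Sf : Fin s → G) (mk uk : ℕ → ℕ)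
    (conn : ℕ → Fin s → ℕ → ℤ → ℤ → Prop) (a : G → ℕ) (p q : G × ℤ) : Prop :=
  (∃ i : Fin s, q.1 = p.1 * Sf i ∧ conn (a p.1) i (a q.1) p.2 q.2) ∧
  SlotOK mk uk a p ∧ SlotOK mk uk a q

/-- Decoded adjacency between marked slots: a chain of hops traversing only
unmarked slots in between. -/
def DecodedAdj {G : Type*} [Group G] {s : ℕ} (Sf : Fin s → G) (mk uk : ℕ → ℕ)
    (conn : ℕ → Fin s → ℕ → ℤ → ℤ → Prop) (a : G → ℕ) (x y : G × ℤ) : Prop :=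
  x ≠ y ∧ 1 ≤ x.2 ∧ 1 ≤ y.2 ∧
  ∃ z : G × ℤ, Relation.ReflTransGen
      (fun p q => Hop Sf mk uk conn a p q ∧ q.2 ≤ 0) x z ∧
    Hop Sf mk uk conn a z y

/-- The graph decoded from a configuration `a`: vertices are the marked slots,
edges the decoded adjacencies. -/
def DecodedGraph {G : Type*} [Group G] {s : ℕ} (Sf : Fin s → G) (mk uk : ℕ → ℕ)
    (conn : ℕ → Fin s → ℕ → ℤ → ℤ → Prop) (a : G → ℕ) :
    SimpleGraph {p : G × ℤ // 1 ≤ p.2 ∧ p.2 ≤ (mk (a p.1) : ℤ)} :=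
  SimpleGraph.fromRel (fun x y => DecodedAdj Sf mk uk conn a x.1 y.1)

/-- The grid: the Cayley graph of ℤ². -/
def gridGraph : SimpleGraph (ℤ × ℤ) :=
  SimpleGraph.fromRel (fun p q =>
    (q.1 = p.1 + 1 ∧ q.2 = p.2) ∨ (q.2 = p.2 + 1 ∧ q.1 = p.1))

/-!
Each marked slot always has exactly four decoded neighbours, and an edge of the decoded graph is
witnessed by finitely many hops. Hence decoding is locally constant on the subshift, and by
compactness the edges at a slot are determined by a finite window. The decoded grids carry no
orientation; it is restored by decorating the slots with phases in `(ℤ/3)²` such that the four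
neighbours of each slot differ from it by the four unit steps. These decorations again form a
subshift of finite type, on which the edges that lead right or up are recognizable from a window,
so that a tileset for `ℤ²` becomes, computably, a tileset for `G`.

The domino problem of `ℤ²` is undecidable by Berger's theorem. The rows and columns of the plane
are forced to form a hierarchy: the odd lines have level zero, and the remaining lines contain a
sparser copy of the same structure (deflation), whose odd lines have level one, and so on. The lines
of level `k` are cut into boxes of `4 * 2 ^ k` lines, and their crossings inside a box carry a piece
of a space-time diagram of a universal Turing machine. Thus a tiling exists if and only if the
machine does not halt. The input word is read by a counter running along the rows, which makes the
tileset depend on the input while the machine stays fixed.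
-/

/-- What a whole line (row or column) of the hierarchical skeleton carries: a phase used for
synchronisation with the neighbouring scales, a block mark, and the number of the block modulo
four. -/
structure Label where
  phase : Bool
  mark : Bool
  idx : ZMod 4
deriving Fintype

/-- Whether a line starts a new box of data. -/
def Label.start (ℓ : Label) : Bool := ℓ.mark && decide (ℓ.idx = 0)

lemma Label.start_eq_true_iff {ℓ : Label} : ℓ.start = true ↔ ℓ.mark = true ∧ ℓ.idx = 0 := by
  simp [start]

/-- What a line carries at one of its cells: `inc` says that the level of the crossing line is at
least that of this one, `ch` counts eighths of the distance between crossing lines of the same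
level, `carry` remembers the block starts one level below, `tally` is the number of the current
block modulo four, and `wire` transports data between crossing lines of the same level. -/
structure Signal (D : Type) where
  inc : Bool
  ch : ZMod 8
  carry : Bool
  tally : ZMod 4
  wire : D
deriving Fintype

/-- The two crossing lines have the same level. -/
abbrev Meet {D D' : Type} (s : Signal D) (s' : Signal D') : Prop := s.inc = true ∧ s'.inc = true

lemma not_meet_of_inc_eq_false {D D' : Type} {s : Signal D} {s' : Signal D'}
    (h : s.inc = false) : ¬ Meet s s' := by
  simp [Meet, h]

/-- The line of `s'` is one level below that of `s`. -/
abbrev Halfway {D D' : Type} (s : Signal D) (s' : Signal D') : Prop :=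
  s.inc = false ∧ s'.inc = true ∧ s'.ch = 4

/-- Evenness of an integer modulo eight. -/
def IsEven8 (a : ZMod 8) : Prop := a.val % 2 = 0

instance (a : ZMod 8) : Decidable (IsEven8 a) := inferInstanceAs (Decidable (_ = _))

/-- The rule governing `inc` and `ch` at a cell of a line. In this and the following rules, `s` is
the signal at the cell, `s₀` the preceding signal on the same line, and `ℓ'` and `s'` are the label
and the signal of the crossing line; `od` and `od'` say that the line and the crossing line have odd
position. -/
structure ChannelRule {D D' : Type} (od od' : Prop) (ℓ' : Label) (s s₀ : Signal D)
    (s' : Signal D') : Prop where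
  inc_of_odd : od → s.inc = true
  not_inc_of_odd : od → ¬ od' → s'.inc = false
  ch_of_odd : od → IsEven8 s₀.ch ∧ s.ch = s₀.ch + 2
  ch_of_inc : ¬ od → s.inc = true → ¬ IsEven8 s₀.ch ∧ s.ch = s₀.ch + 1
  ch_of_halfway : ¬ od → Halfway s s' → IsEven8 s₀.ch ∧ s.ch = s₀.ch + 1
  ch_of_pass : ¬ od → s.inc = false → ¬ Halfway s s' → s.ch = s₀.ch
  ch_of_meet : Meet s s' → (s.ch = 2 ∧ ℓ'.phase = false) ∨ (s.ch = 6 ∧ ℓ'.phase = true)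
  ch_of_not_meet : s.inc = true → s'.inc = false → s.ch = 0 ∨ s.ch = 4

/-- The rule governing the block marks: the starts of the boxes of one level are the block marks of
the next level. -/
structure CarryRule {D D' : Type} (od : Prop) (ℓ' : Label) (s s₀ : Signal D)
    (s' : Signal D') : Prop where
  carry_of_halfway : ¬ od → Halfway s s' → s.carry = ℓ'.start
  carry_of_pass : ¬ od → ¬ Halfway s s' → s.carry = s₀.carry
  mark_of_meet : ¬ od → Meet s s' → ℓ'.mark = s₀.carry

/-- The rule counting the blocks modulo four. -/
structure TallyRule {D D' : Type} (ℓ' : Label) (s s₀ : Signal D) (s' : Signal D') : Prop where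
  tally_of_meet : Meet s s' → ℓ'.idx = s₀.tally + (if ℓ'.mark then 1 else 0) ∧ s.tally = ℓ'.idx
  tally_of_pass : ¬ Meet s s' → s.tally = s₀.tally

/-- The rule governing the data: inside a box, consecutive data on a line are related by `rel`. -/
structure WireRule {D D' : Type} (rel : D → D → Prop) (ℓ' : Label) (s s₀ : Signal D)
    (s' : Signal D') : Prop where
  wire_of_meet : Meet s s' → ℓ'.start = false → rel s₀.wire s.wire
  wire_of_pass : ¬ Meet s s' → s.wire = s₀.wire

/-- The local rule of a line of label `ℓ`. -/
structure LineRule {D D' : Type} (rel : D → D → Prop) (od od' : Prop) (ℓ ℓ' : Label)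
    (s s₀ : Signal D) (s' : Signal D') : Prop extends
    ChannelRule od od' ℓ' s s₀ s', CarryRule od ℓ' s s₀ s', TallyRule ℓ' s s₀ s',
    WireRule rel ℓ' s s₀ s' where
  phase_of_start : ℓ.start = true → ℓ.phase = false

/-- One of the two families of lines (the rows or the columns) of a configuration of the plane;
`sig x y` is the signal of the `y`-th line where it crosses the `x`-th line of the other family. -/
structure Lines (D : Type) where
  label : ℤ → Label
  sig : ℤ → ℤ → Signal D

/-- The lines of `R` satisfy the local rule where they cross those of `C`. -/
def Lines.Obeys {D D' : Type} (R : Lines D) (rel : D → D → Prop) (C : Lines D') : Prop :=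
  ∀ x y : ℤ, LineRule rel (Odd y) (Odd x) (R.label y) (C.label x) (R.sig x y) (R.sig (x - 1) y)
    (C.sig y x)

/-- The lines at the positions congruent to `b` modulo two, seen where they cross the lines at the
positions congruent to `a`. -/
def Lines.deflate {D : Type} (R : Lines D) (a b : ℤ) : Lines D where
  label j := R.label (2 * j + b)
  sig i j := R.sig (2 * i + a) (2 * j + b)

/-- The even offset `b` is compatible with the phases of the odd lines: after deflation by `b`,
line `j` is odd if and only if the line below it has phase `false`. -/
structure Lines.Aligned {D : Type} (R : Lines D) (b : ℤ) : Prop where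
  even : Even b
  phase_iff : ∀ j : ℤ, (R.label (2 * j + b - 1)).phase = false ↔ Odd j

section Deflation

variable {D D' : Type} {rel : D → D → Prop} {rel' : D' → D' → Prop} {R : Lines D} {C : Lines D'}

lemma Lines.Aligned.not_odd {b : ℤ} (hb : R.Aligned b) (j : ℤ) : ¬ Odd (2 * j + b) := by
  have := hb.even
  grind

lemma Lines.Aligned.odd_sub_one {b : ℤ} (hb : R.Aligned b) (j : ℤ) : Odd (2 * j + b - 1) := by
  have := hb.even
  grind

lemma Lines.Obeys.inc_eq_false (hC : C.Obeys rel' R) {x y : ℤ} (hx : Odd x) (hy : ¬ Odd y) :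
    (R.sig x y).inc = false :=
  (hC y x).not_inc_of_odd hx hy

lemma Lines.Obeys.ch_odd_even (hR : R.Obeys rel C) (hC : C.Obeys rel' R) {x y : ℤ} (hx : Odd x)
    (hy : ¬ Odd y) :
    ((C.sig y x).ch = 4 ∧ (R.label (y - 1)).phase = false) ∨
      ((C.sig y x).ch = 0 ∧ (R.label (y - 1)).phase = true) := by
  have hy1 : Odd (y - 1) := by grind
  have hch := ((hC y x).ch_of_odd hx).2
  rcases (hC (y - 1) x).ch_of_meet ⟨(hC (y - 1) x).inc_of_odd hx, (hR x (y - 1)).inc_of_odd hy1⟩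
    with ⟨h, hph⟩ | ⟨h, hph⟩
  · left; rw [hch, h]; exact ⟨by decide, hph⟩
  · right; rw [hch, h]; exact ⟨by decide, hph⟩

lemma Lines.Obeys.ch_eq_four (hR : R.Obeys rel C) (hC : C.Obeys rel' R) {x y : ℤ} (hx : Odd x)
    (hy : ¬ Odd y) (hph : (R.label (y - 1)).phase = false) : (C.sig y x).ch = 4 := by
  rcases hR.ch_odd_even hC hx hy with h | h
  · exact h.1
  · simp [hph] at h

lemma Lines.Obeys.halfway (hR : R.Obeys rel C) (hC : C.Obeys rel' R) {x y : ℤ} (hx : Odd x)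
    (hy : ¬ Odd y) (hph : (R.label (y - 1)).phase = false) : Halfway (R.sig x y) (C.sig y x) :=
  ⟨hC.inc_eq_false hx hy, (hC y x).inc_of_odd hx, hR.ch_eq_four hC hx hy hph⟩

lemma Lines.Obeys.not_halfway (hR : R.Obeys rel C) (hC : C.Obeys rel' R) {x y : ℤ} (hx : Odd x)
    (hy : ¬ Odd y) (hph : (R.label (y - 1)).phase = true) : ¬ Halfway (R.sig x y) (C.sig y x) := by
  rintro ⟨-, -, h4⟩
  rcases hR.ch_odd_even hC hx hy with h | h
  · simp [hph] at h
  · rw [h.1] at h4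
    exact absurd h4 (by decide)

lemma Lines.Obeys.phase_add_two (hR : R.Obeys rel C) (hC : C.Obeys rel' R) {y : ℤ} (hy : Odd y) :
    (R.label (y + 2)).phase = !(R.label y).phase := by
  have hy2 : Odd (y + 2) := by grind
  have inc_col : ∀ z, (C.sig z 1).inc = true := fun z => (hC z 1).inc_of_odd odd_one
  have step : (C.sig (y + 2) 1).ch = (C.sig y 1).ch + 2 + 2 := by
    have h₁ := ((hC (y + 2) 1).ch_of_odd odd_one).2
    have h₂ := ((hC (y + 1) 1).ch_of_odd odd_one).2
    rw [show y + 2 - 1 = y + 1 by ring] at h₁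
    rw [add_sub_cancel_right] at h₂
    rw [h₁, h₂]
  have c := (hC y 1).ch_of_meet ⟨inc_col _, (hR 1 y).inc_of_odd hy⟩
  have d := (hC (y + 2) 1).ch_of_meet ⟨inc_col _, (hR 1 (y + 2)).inc_of_odd hy2⟩
  rw [step] at d
  rcases c with ⟨h, hph⟩ | ⟨h, hph⟩ <;> rcases d with ⟨g, gph⟩ | ⟨g, gph⟩ <;> rw [h] at g <;>
    first | exact absurd g (by decide) | simp [hph, gph]

lemma not_isEven8_add_one {u v : ZMod 8} (hu : IsEven8 u) (hv : v = u + 1) : ¬ IsEven8 v := by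
  revert u v; decide

lemma Lines.Obeys.inc_and_ch_of_phase_false (hR : R.Obeys rel C) (hC : C.Obeys rel' R) {x y : ℤ}
    (hy : ¬ Odd y) (hx : ¬ Odd x) (hph : (R.label (y - 1)).phase = false) :
    (R.sig x y).inc = true ∧ IsEven8 (R.sig (x - 2) y).ch ∧
      (R.sig x y).ch = (R.sig (x - 2) y).ch + 2 := by
  have hx1 : Odd (x - 1) := by grind
  have hx2 : Odd (x + 1) := by grind
  have before := (hR (x - 1) y).ch_of_halfway hy (hR.halfway hC hx1 hy hph)
  have after := (hR (x + 1) y).ch_of_halfway hy (hR.halfway hC hx2 hy hph)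
  rw [show x - 1 - 1 = x - 2 by ring] at before
  rw [add_sub_cancel_right] at after
  have odd_before := not_isEven8_add_one before.1 before.2
  have inc : (R.sig x y).inc = true := by
    by_contra hi
    rw [Bool.not_eq_true] at hi
    by_cases h : Halfway (R.sig x y) (C.sig y x)
    · exact odd_before ((hR x y).ch_of_halfway hy h).1
    · rw [(hR x y).ch_of_pass hy hi h] at after
      exact odd_before after.1
  refine ⟨inc, before.1, ?_⟩
  rw [((hR x y).ch_of_inc hy inc).2, before.2, add_assoc, one_add_one_eq_two]

lemma Lines.Obeys.inc_eq_false_of_phase (hR : R.Obeys rel C) (hC : C.Obeys rel' R) {x y : ℤ}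
    (hy : ¬ Odd y) (hx : ¬ Odd x) (hph : (R.label (y - 1)).phase = false)
    (hph' : (C.label (x - 1)).phase = true) : (C.sig y x).inc = false := by
  have hx2 : ¬ Odd (x + 2) := by grind
  have phase_next : (C.label (x + 2 - 1)).phase = false := by
    rw [show x + 2 - 1 = x - 1 + 2 by ring, hC.phase_add_two hR (by grind), hph', Bool.not_true]
  have row_here := hR.inc_and_ch_of_phase_false hC hy hx hph
  have row_next := hR.inc_and_ch_of_phase_false hC hy hx2 hph
  have col_next := hC.inc_and_ch_of_phase_false hR hx2 hy phase_next
  rw [add_sub_cancel_right] at row_next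
  by_contra hi
  have meet_next := (hR (x + 2) y).ch_of_meet ⟨row_next.1, col_next.1⟩
  have meet_here := (hR x y).ch_of_meet ⟨row_here.1, by simpa using hi⟩
  rw [row_next.2.2] at meet_next
  rcases meet_next with ⟨h, -⟩ | ⟨h, -⟩ <;> rcases meet_here with ⟨g, -⟩ | ⟨g, -⟩ <;>
    rw [g] at h <;> exact absurd h (by decide)

lemma Lines.Aligned.phase_eq_true {b : ℤ} (hb : R.Aligned b) {j : ℤ} (hj : ¬ Odd j) :
    (R.label (2 * j + b - 1)).phase = true := by
  rwa [← hb.phase_iff, Bool.not_eq_false] at hj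

lemma Lines.Obeys.deflate_sub_one (hR : R.Obeys rel C) (hC : C.Obeys rel' R) {a b : ℤ}
    (ha : C.Aligned a) (hb : R.Aligned b) (i j : ℤ) :
    (R.sig (2 * i + a - 1) (2 * j + b)).tally = ((R.deflate a b).sig (i - 1) j).tally ∧
      (R.sig (2 * i + a - 1) (2 * j + b)).wire = ((R.deflate a b).sig (i - 1) j).wire ∧
      (¬ Odd j → (R.sig (2 * i + a - 1) (2 * j + b)).ch = ((R.deflate a b).sig (i - 1) j).ch ∧
        (R.sig (2 * i + a - 1) (2 * j + b)).carry = ((R.deflate a b).sig (i - 1) j).carry) := by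
  have hx := ha.odd_sub_one i
  have hy := hb.not_odd j
  have rule := hR (2 * i + a - 1) (2 * j + b)
  have not_inc := hC.inc_eq_false hx hy
  have not_meet := not_meet_of_inc_eq_false (s' := C.sig (2 * j + b) (2 * i + a - 1)) not_inc
  have not_halfway := fun hj => hR.not_halfway hC hx hy (hb.phase_eq_true (j := j) hj)
  simp only [Lines.deflate]
  rw [show 2 * (i - 1) + a = 2 * i + a - 1 - 1 by ring]
  exact ⟨rule.tally_of_pass not_meet, rule.wire_of_pass not_meet, fun hj =>
    ⟨rule.ch_of_pass hy not_inc (not_halfway hj), rule.carry_of_pass hy (not_halfway hj)⟩⟩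

lemma Lines.Obeys.deflate_channelRule (hR : R.Obeys rel C) (hC : C.Obeys rel' R) {a b : ℤ}
    (ha : C.Aligned a) (hb : R.Aligned b) (i j : ℤ) :
    ChannelRule (Odd j) (Odd i) ((C.deflate b a).label i) ((R.deflate a b).sig i j)
      ((R.deflate a b).sig (i - 1) j) ((C.deflate b a).sig j i) := by
  have hx := ha.not_odd i
  have hy := hb.not_odd j
  have rule := hR (2 * i + a) (2 * j + b)
  have prev := fun hj => ((hR.deflate_sub_one hC ha hb i j).2.2 hj).1
  have exact_row := fun hj : Odd j =>
    hR.inc_and_ch_of_phase_false hC hy hx ((hb.phase_iff j).2 hj)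
  rw [show 2 * i + a - 2 = 2 * (i - 1) + a by ring] at exact_row
  exact
    { inc_of_odd := fun hj => (exact_row hj).1
      not_inc_of_odd := fun hj hi =>
        hR.inc_eq_false_of_phase hC hy hx ((hb.phase_iff j).2 hj) (ha.phase_eq_true hi)
      ch_of_odd := fun hj => (exact_row hj).2
      ch_of_inc := fun hj => by rw [← prev hj]; exact rule.ch_of_inc hy
      ch_of_halfway := fun hj => by rw [← prev hj]; exact rule.ch_of_halfway hy
      ch_of_pass := fun hj => by rw [← prev hj]; exact rule.ch_of_pass hy
      ch_of_meet := rule.ch_of_meet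
      ch_of_not_meet := rule.ch_of_not_meet }

lemma Lines.Obeys.deflate (hR : R.Obeys rel C) (hC : C.Obeys rel' R) {a b : ℤ}
    (ha : C.Aligned a) (hb : R.Aligned b) : (R.deflate a b).Obeys rel (C.deflate b a) := by
  intro i j
  have hy := hb.not_odd j
  have rule := hR (2 * i + a) (2 * j + b)
  obtain ⟨tally_prev, wire_prev, prev⟩ := hR.deflate_sub_one hC ha hb i j
  exact
    { toChannelRule := hR.deflate_channelRule hC ha hb i j
      carry_of_halfway := fun _ => rule.carry_of_halfway hy
      carry_of_pass := fun hj => by rw [← (prev hj).2]; exact rule.carry_of_pass hy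
      mark_of_meet := fun hj => by rw [← (prev hj).2]; exact rule.mark_of_meet hy
      tally_of_meet := by rw [← tally_prev]; exact rule.tally_of_meet
      tally_of_pass := by rw [← tally_prev]; exact rule.tally_of_pass
      wire_of_meet := by rw [← wire_prev]; exact rule.wire_of_meet
      wire_of_pass := by rw [← wire_prev]; exact rule.wire_of_pass
      phase_of_start := rule.phase_of_start }

lemma exists_odd_iff_of_alternating {f : ℤ → Bool} (step : ∀ x, f (x + 1) = !f x) :
    ∃ a, ∀ x, f (x + a) = true ↔ Odd x := by
  have key : ∀ a, f a = false → ∀ x, f (x + a) = true ↔ Odd x := by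
    intro a ha x
    induction x with
    | zero => simp [ha]
    | succ i ih => rw [add_right_comm, step, Int.odd_add, ← ih]; simp
    | pred i ih =>
      have h := step (-i - 1 + a)
      rw [show (-i - 1 + a + 1 : ℤ) = -i + a by ring] at h
      rw [Int.odd_sub, ← ih, h]
      simp
  by_cases h : f 0 = true
  · exact ⟨1, key 1 (by simpa [h] using step 0)⟩
  · exact ⟨0, key 0 (by simpa using h)⟩

lemma Lines.Obeys.exists_aligned (hR : R.Obeys rel C) (hC : C.Obeys rel' R) :
    ∃ b, R.Aligned b := by
  have alternating : ∀ j : ℤ, (!(R.label (2 * (j + 1) - 1)).phase) =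
      !(!(R.label (2 * j - 1)).phase) := by
    intro j
    rw [show 2 * (j + 1) - 1 = 2 * j - 1 + 2 by ring, hR.phase_add_two hC (by grind)]
  obtain ⟨a, ha⟩ := exists_odd_iff_of_alternating (f := fun j => !(R.label (2 * j - 1)).phase)
    alternating
  refine ⟨2 * a, even_two_mul a, fun j => ?_⟩
  rw [← ha, ← mul_add, Bool.not_eq_true']

end Deflation

section Blocks

lemma ediv_eq_sub_one_ediv_add_ite {b : ℤ} (hb : 0 < b) (x : ℤ) :
    x / b = (x - 1) / b + if b ∣ x then 1 else 0 := by
  split_ifs with h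
  · obtain ⟨m, rfl⟩ := h
    rw [Int.mul_ediv_cancel_left _ hb.ne', ← sub_eq_iff_eq_add, eq_comm,
      Int.ediv_eq_iff_of_pos hb]
    constructor <;> nlinarith
  · have pos : 0 < x % b :=
      (Int.emod_nonneg x hb.ne').lt_of_ne' fun h₀ => h (Int.dvd_of_emod_eq_zero h₀)
    have := Int.emod_lt_of_pos x hb
    have := Int.emod_add_mul_ediv x b
    rw [add_zero, eq_comm, Int.ediv_eq_iff_of_pos hb]
    constructor <;> linarith

lemma eq_zero_add_ediv {f : ℤ → ZMod 4} {b : ℤ} (hb : 0 < b)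
    (step : ∀ m, f m = f (m - 1) + if b ∣ m then 1 else 0) (m : ℤ) :
    f m = f 0 + ((m / b : ℤ) : ZMod 4) := by
  have key : ∀ m, f m - ((m / b : ℤ) : ZMod 4) = f (m - 1) - (((m - 1) / b : ℤ) : ZMod 4) := by
    intro m
    rw [step m, ediv_eq_sub_one_ediv_add_ite hb m]
    split_ifs <;> push_cast <;> ring
  have const : f m - ((m / b : ℤ) : ZMod 4) = f 0 := by
    induction m with
    | zero => simp
    | succ i ih => rw [key, ← ih, add_sub_cancel_right]
    | pred i ih => rw [← key, ih]
  rw [← const, sub_add_cancel]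

lemma dvd_and_ediv_cast_eq_zero_iff {b : ℤ} (hb : 0 < b) (m : ℤ) :
    (b ∣ m ∧ ((m / b : ℤ) : ZMod 4) = 0) ↔ 4 * b ∣ m := by
  rw [ZMod.intCast_zmod_eq_zero_iff_dvd]
  constructor
  · rintro ⟨⟨u, rfl⟩, h⟩
    rw [Int.mul_ediv_cancel_left _ hb.ne'] at h
    rw [mul_comm b]
    exact mul_dvd_mul_right h b
  · rintro ⟨v, rfl⟩
    rw [mul_comm 4 b, mul_assoc, Int.mul_ediv_cancel_left _ hb.ne']
    exact ⟨dvd_mul_right _ _, dvd_mul_right _ _⟩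

/-- The odd lines of `C` are divided into blocks of `2 ^ k` lines, one of which starts at the
line `2 * β + 1`, the start of block number zero. -/
structure Lines.Blocks {D : Type} (C : Lines D) (k : ℕ) (β : ℤ) : Prop where
  mark_iff : ∀ m : ℤ, (C.label (2 * m + 1)).mark = true ↔ (2 : ℤ) ^ k ∣ m - β
  idx_eq : ∀ m : ℤ, (C.label (2 * m + 1)).idx = (((m - β) / 2 ^ k : ℤ) : ZMod 4)

lemma Lines.Blocks.start_iff {D : Type} {C : Lines D} {k : ℕ} {β : ℤ} (h : C.Blocks k β) (m : ℤ) :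
    (C.label (2 * m + 1)).start = true ↔ 4 * (2 : ℤ) ^ k ∣ m - β := by
  rw [Label.start_eq_true_iff, h.mark_iff, h.idx_eq,
    dvd_and_ediv_cast_eq_zero_iff (by positivity)]

variable {D D' : Type} {rel : D → D → Prop} {rel' : D' → D' → Prop} {R : Lines D} {C : Lines D'}

lemma not_odd_two_mul (i : ℤ) : ¬ Odd (2 * i) := Int.not_odd_iff_even.2 (even_two_mul i)

lemma Lines.Obeys.meet_odd (hR : R.Obeys rel C) (hC : C.Obeys rel' R) (i j : ℤ) :
    Meet (R.sig (2 * i + 1) (2 * j + 1)) (C.sig (2 * j + 1) (2 * i + 1)) :=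
  ⟨(hR _ _).inc_of_odd (odd_two_mul_add_one j), (hC _ _).inc_of_odd (odd_two_mul_add_one i)⟩

lemma Lines.Obeys.not_meet_even (hR : R.Obeys rel C) (i j : ℤ) :
    ¬ Meet (R.sig (2 * i) (2 * j + 1)) (C.sig (2 * j + 1) (2 * i)) := fun h =>
  Bool.false_ne_true <|
    ((hR (2 * i) _).not_inc_of_odd (odd_two_mul_add_one j) (not_odd_two_mul i)).symm.trans h.2

lemma Lines.Obeys.idx_step (hR : R.Obeys rel C) (hC : C.Obeys rel' R) (m : ℤ) :
    (C.label (2 * m + 1)).idx = (C.label (2 * (m - 1) + 1)).idx +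
      if (C.label (2 * m + 1)).mark then 1 else 0 := by
  have here := (hR (2 * m + 1) (2 * 0 + 1)).tally_of_meet (hR.meet_odd hC m 0)
  have before := (hR (2 * (m - 1) + 1) (2 * 0 + 1)).tally_of_meet (hR.meet_odd hC (m - 1) 0)
  have between := (hR (2 * m) (2 * 0 + 1)).tally_of_pass (hR.not_meet_even m 0)
  rw [add_sub_cancel_right, between, show 2 * m - 1 = 2 * (m - 1) + 1 by ring, before.2] at here
  exact here.1

lemma Lines.Obeys.exists_blocks (hR : R.Obeys rel C) (hC : C.Obeys rel' R) {k : ℕ} {β : ℤ}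
    (h : ∀ m : ℤ, (C.label (2 * m + 1)).mark = true ↔ (2 : ℤ) ^ k ∣ m - β) :
    ∃ β', C.Blocks k β' := by
  have hk : (0 : ℤ) < 2 ^ k := by positivity
  have idx_eq := eq_zero_add_ediv (f := fun m => (C.label (2 * (m + β) + 1)).idx) hk fun m => by
    have := hR.idx_step hC (m + β)
    simp only [h, add_sub_cancel_right] at this
    rwa [show m - 1 + β = m + β - 1 by ring]
  obtain ⟨t, ht⟩ := ZMod.intCast_surjective (C.label (2 * (0 + β) + 1)).idx
  refine ⟨β - 2 ^ k * t, fun m => ?_, fun m => ?_⟩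
  · rw [h m, ← sub_add]
    exact (dvd_add_left (dvd_mul_right _ _)).symm
  · have := idx_eq (m - β)
    simp only [sub_add_cancel] at this
    rw [this, ← ht, ← sub_add, Int.add_mul_ediv_left _ _ hk.ne']
    push_cast
    ring

lemma Lines.Obeys.mark_deflate_iff (hR : R.Obeys rel C) (hC : C.Obeys rel' R) {a b : ℤ}
    (ha : C.Aligned a) (hb : R.Aligned b) (i : ℤ) :
    ((C.deflate b a).label (2 * i + 1)).mark = true ↔
      (C.label (2 * (2 * i + 1) + a - 1)).start = true := by
  have hy := hb.not_odd 1
  have hx := ha.not_odd (2 * i + 1)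
  have rowPhase := (hb.phase_iff 1).2 odd_one
  have colPhase := (ha.phase_iff (2 * i + 1)).2 (odd_two_mul_add_one i)
  have meet : Meet (R.sig (2 * (2 * i + 1) + a) (2 * 1 + b)) (C.sig (2 * 1 + b) _) :=
    ⟨(hR.inc_and_ch_of_phase_false hC hy hx rowPhase).1,
      (hC.inc_and_ch_of_phase_false hR hx hy colPhase).1⟩
  have halfway := hR.halfway hC (ha.odd_sub_one (2 * i + 1)) hy rowPhase
  have carry := (hR _ _).carry_of_halfway hy halfway
  rw [← carry, ← (hR _ _).mark_of_meet hy meet]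
  rfl

lemma Lines.Obeys.deflate_blocks (hR : R.Obeys rel C) (hC : C.Obeys rel' R) {a b : ℤ}
    (ha : C.Aligned a) (hb : R.Aligned b) {k : ℕ} {β : ℤ} (hβ : C.Blocks k β) :
    ∃ β', (C.deflate b a).Blocks (k + 1) β' := by
  obtain ⟨a', rfl⟩ := ha.even
  have phase_β : (C.label (2 * β + 1)).phase = false :=
    (hC 0 _).phase_of_start ((hβ.start_iff β).2 (by simp))
  obtain ⟨i₀, hi₀⟩ : Odd (β + 1 - a') := by
    rw [← ha.phase_iff, ← phase_β]
    congr 3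
    ring
  refine (hR.deflate hC ha hb).exists_blocks (hC.deflate hR hb ha) (β := i₀) fun i => ?_
  rw [hR.mark_deflate_iff hC ha hb,
    show 2 * (2 * i + 1) + (a' + a') - 1 = 2 * (2 * i + a') + 1 by ring, hβ.start_iff,
    show 2 * i + a' - β = 2 * (i - i₀) by linarith,
    show 4 * (2 : ℤ) ^ k = 2 * 2 ^ (k + 1) by ring]
  exact mul_dvd_mul_iff_left two_ne_zero

end Blocks

section Boxes

/-- What a tile does, from left to right, to a counter which points into an input word. The tiles
form a finite set, while the counter is bounded only by the length of the word. -/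
inductive CounterAction
  | pass
  | reset
  | readFirst (σ : ℕ)
  | readNext (σ : ℕ)

/-- The effect of an action on the counter, and the condition on the letter it reads from `ℓ`.
Beyond the end of the word, the counter stays at `ℓ.length` and the letter is zero. -/
def CounterAction.Rule (ℓ : List ℕ) : CounterAction → ℕ → ℕ → Prop
  | pass, r₀, r => r = r₀
  | reset, _, r => r = 0
  | readFirst σ, _, r => r = 0 ∧ ℓ.getD 0 0 = σ
  | readNext σ, r₀, r => r = min (r₀ + 1) ℓ.length ∧ ℓ.getD r 0 = σ

/-- Constraints on the data transported by the wires of a hierarchical skeleton: horizontal and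
vertical adjacency inside a box, the admissible data on the bottom row of a box and in the middle of
it, and the action of the data on the counter. -/
structure DataSpec (D : Type) where
  hor : D → D → Prop
  ver : D → D → Prop
  init : D → Prop
  seed : D → Prop
  action : D → CounterAction

variable {D : Type} {S : DataSpec D} {ℓ : List ℕ} {R C : Lines D} {r : ℤ → ℤ → ℕ}

/-- A hierarchical skeleton with rows `R` and columns `C`, whose wires satisfy the constraints `S`;
the counter has the value `r x y` at the point `(x, y)`. -/
structure DataSpec.IsConfig (S : DataSpec D) (ℓ : List ℕ) (R C : Lines D) (r : ℤ → ℤ → ℕ) :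
    Prop where
  rows : R.Obeys S.hor C
  cols : C.Obeys S.ver R
  wire_eq : ∀ {x y}, Meet (R.sig x y) (C.sig y x) → (R.sig x y).wire = (C.sig y x).wire
  init : ∀ {x y}, Meet (R.sig x y) (C.sig y x) → (R.label y).start = true → S.init (R.sig x y).wire
  seed : ∀ {x y}, Meet (R.sig x y) (C.sig y x) → (R.label y).start = true →
    (C.label x).mark = true → (C.label x).idx = 2 → S.seed (R.sig x y).wire
  count : ∀ {x y}, Meet (R.sig x y) (C.sig y x) →
    (S.action (R.sig x y).wire).Rule ℓ (r (x - 1) y) (r x y)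
  count_pass : ∀ {x y}, ¬ Meet (R.sig x y) (C.sig y x) → r x y = r (x - 1) y

lemma DataSpec.IsConfig.deflate (h : S.IsConfig ℓ R C r) {a b : ℤ} (ha : C.Aligned a)
    (hb : R.Aligned b) :
    S.IsConfig ℓ (R.deflate a b) (C.deflate b a) (fun i j => r (2 * i + a) (2 * j + b)) := by
  have pass : ∀ i j : ℤ, r (2 * (i - 1) + a) (2 * j + b) = r (2 * i + a - 1) (2 * j + b) := by
    intro i j
    rw [h.count_pass (x := 2 * i + a - 1)
      (not_meet_of_inc_eq_false (h.cols.inc_eq_false (ha.odd_sub_one i) (hb.not_odd j)))]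
    congr 1
    ring
  refine ⟨h.rows.deflate h.cols ha hb, h.cols.deflate h.rows hb ha, h.wire_eq, h.init, h.seed,
    fun hm => ?_, fun hm => ?_⟩
  · rw [pass]; exact h.count hm
  · rw [pass]; exact h.count_pass hm

/-- A configuration whose odd lines are divided into blocks of `2 ^ k` lines exists. -/
def DataSpec.HasStage (S : DataSpec D) (ℓ : List ℕ) (k : ℕ) : Prop :=
  ∃ (R C : Lines D) (r : ℤ → ℤ → ℕ) (β γ : ℤ), S.IsConfig ℓ R C r ∧ R.Blocks k β ∧ C.Blocks k γ

lemma DataSpec.HasStage.succ {k : ℕ} : S.HasStage ℓ k → S.HasStage ℓ (k + 1) := by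
  rintro ⟨R, C, r, β, γ, h, hβ, hγ⟩
  obtain ⟨b, hb⟩ := h.rows.exists_aligned h.cols
  obtain ⟨a, ha⟩ := h.cols.exists_aligned h.rows
  obtain ⟨β', hβ'⟩ := h.cols.deflate_blocks h.rows hb ha hβ
  obtain ⟨γ', hγ'⟩ := h.rows.deflate_blocks h.cols ha hb hγ
  exact ⟨_, _, _, β', γ', h.deflate ha hb, hβ', hγ'⟩

lemma DataSpec.IsConfig.hasStage (h : S.IsConfig ℓ R C r)
    (hR : ∀ y, Odd y → (R.label y).mark = true) (hC : ∀ x, Odd x → (C.label x).mark = true)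
    (k : ℕ) : S.HasStage ℓ k := by
  induction k with
  | zero =>
    obtain ⟨β, hβ⟩ := h.cols.exists_blocks h.rows (k := 0) (β := 0) (by simp [hR])
    obtain ⟨γ, hγ⟩ := h.rows.exists_blocks h.cols (k := 0) (β := 0) (by simp [hC])
    exact ⟨R, C, r, β, γ, h, hβ, hγ⟩
  | succ k ih => exact ih.succ

/-- A box of side `4 * b` of data satisfying the constraints `S`. -/
structure DataSpec.IsBox (S : DataSpec D) (ℓ : List ℕ) (b : ℤ) (d : ℤ → ℤ → D)
    (r : ℤ → ℤ → ℕ) : Prop where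
  hor : ∀ {i} j, 0 < i → i < 4 * b → S.hor (d (i - 1) j) (d i j)
  ver : ∀ i {j}, 0 < j → j < 4 * b → S.ver (d i (j - 1)) (d i j)
  init : ∀ i, S.init (d i 0)
  seed : S.seed (d (2 * b) 0)
  count : ∀ i j, (S.action (d i j)).Rule ℓ (r (i - 1) j) (r i j)

lemma Lines.Blocks.start_eq_false {β : ℤ} {k : ℕ} (h : R.Blocks k β) {j : ℤ} (h₀ : 0 < j)
    (hj : j < 4 * 2 ^ k) : (R.label (2 * (j + β) + 1)).start = false := by
  rw [← Bool.not_eq_true, h.start_iff, add_sub_cancel_right]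
  exact fun hd => absurd (Int.le_of_dvd h₀ hd) (not_le.2 hj)

lemma Lines.Obeys.wire_two_mul {rel : D → D → Prop} (hR : R.Obeys rel C) (i j : ℤ) :
    (R.sig (2 * i + 1 - 1) (2 * j + 1)).wire = (R.sig (2 * (i - 1) + 1) (2 * j + 1)).wire := by
  rw [add_sub_cancel_right, (hR _ _).wire_of_pass (hR.not_meet_even i j)]
  congr 2
  ring

lemma DataSpec.HasStage.exists_isBox {k : ℕ} : S.HasStage ℓ k → ∃ d r, S.IsBox ℓ (2 ^ k) d r := by
  rintro ⟨R, C, r, β, γ, h, hβ, hγ⟩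
  have hk : (0 : ℤ) < 2 ^ k := by positivity
  have meet := h.rows.meet_odd h.cols
  have start_β : (R.label (2 * (0 + β) + 1)).start = true := (hβ.start_iff _).2 (by simp)
  refine ⟨fun i j => (R.sig (2 * (i + γ) + 1) (2 * (j + β) + 1)).wire,
    fun i j => r (2 * (i + γ) + 1) (2 * (j + β) + 1), fun {i} j h₀ hi => ?_, fun i {j} h₀ hj => ?_,
    fun i => h.init (meet _ _) start_β, ?_, fun i j => ?_⟩
  · have := (h.rows _ _).wire_of_meet (meet _ (j + β)) (hγ.start_eq_false h₀ hi)
    rwa [h.rows.wire_two_mul, show i + γ - 1 = i - 1 + γ by ring] at this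
  · have := (h.cols _ _).wire_of_meet (meet (i + γ) _).symm (hβ.start_eq_false h₀ hj)
    rw [h.cols.wire_two_mul, show j + β - 1 = j - 1 + β by ring] at this
    simpa only [h.wire_eq (meet _ _)] using this
  · refine h.seed (meet _ _) start_β ?_ ?_
    · simp [hγ.mark_iff]
    · rw [hγ.idx_eq, add_sub_cancel_right, Int.mul_ediv_cancel _ hk.ne']
      rfl
  · have := h.count (meet (i + γ) (j + β))
    rwa [add_sub_cancel_right, h.count_pass (h.rows.not_meet_even _ _),
      show 2 * (i + γ) - 1 = 2 * (i - 1 + γ) + 1 by ring] at this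

end Boxes

section CanonicalConfiguration

/-- The `J`-th line of level `k` of the canonical skeleton. -/
def gridPoint (k : ℕ) (J : ℤ) : ℤ := 2 ^ k * (2 * J + 1)

lemma two_pow_dvd_gridPoint_iff {k j : ℕ} {J : ℤ} : (2 : ℤ) ^ k ∣ gridPoint j J ↔ k ≤ j := by
  refine ⟨fun h => ?_, fun h => (pow_dvd_pow _ h).mul_right _⟩
  have coprime : IsCoprime ((2 : ℤ) ^ k) (2 * J + 1) := IsCoprime.pow_left ⟨-J, 1, by ring⟩
  have : (2 ^ k : ℕ) ∣ 2 ^ j := by exact_mod_cast coprime.dvd_of_dvd_mul_right h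
  exact (Nat.pow_dvd_pow_iff_le_right one_lt_two).1 this

lemma gridPoint_ne_zero (k : ℕ) (J : ℤ) : gridPoint k J ≠ 0 :=
  mul_ne_zero (by positivity) (by omega)

lemma level_eq_of_gridPoint_eq {k j : ℕ} {J I : ℤ} (h : gridPoint k J = gridPoint j I) : k = j :=
  le_antisymm (two_pow_dvd_gridPoint_iff.1 (h ▸ two_pow_dvd_gridPoint_iff.2 le_rfl))
    (two_pow_dvd_gridPoint_iff.1 (h.symm ▸ two_pow_dvd_gridPoint_iff.2 le_rfl))

lemma gridPoint_injective : Function.Injective fun p : ℕ × ℤ => gridPoint p.1 p.2 := by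
  rintro ⟨k, J⟩ ⟨j, I⟩ h
  obtain rfl := level_eq_of_gridPoint_eq h
  have := mul_left_cancel₀ (by positivity) h
  simp only [Prod.mk.injEq, true_and]
  omega

lemma exists_eq_gridPoint {y : ℤ} (hy : y ≠ 0) : ∃ k J, y = gridPoint k J := by
  obtain ⟨u, hy', hu⟩ :=
    (Int.finiteMultiplicity_iff (a := 2).2 ⟨by decide, hy⟩).exists_eq_pow_mul_and_not_dvd
  rw [← even_iff_two_dvd, Int.not_even_iff_odd] at hu
  obtain ⟨J, rfl⟩ := hu
  exact ⟨_, J, hy'⟩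

lemma odd_gridPoint_iff {k : ℕ} {J : ℤ} : Odd (gridPoint k J) ↔ k = 0 := by
  rw [← Int.not_even_iff_odd, even_iff_two_dvd, ← pow_one (2 : ℤ), two_pow_dvd_gridPoint_iff]
  omega

/-- Level and number of a nonzero line of the canonical skeleton. -/
noncomputable def gridCoord : ℤ → ℕ × ℤ := Function.invFun fun p => gridPoint p.1 p.2

lemma gridCoord_gridPoint (k : ℕ) (J : ℤ) : gridCoord (gridPoint k J) = (k, J) :=
  Function.leftInverse_invFun gridPoint_injective (k, J)

/-- The number of the last line of level `k` at a position at most `x`. -/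
def lastIndex (k : ℕ) (x : ℤ) : ℤ := (x - 2 ^ k) / (2 * 2 ^ k)

lemma lastIndex_gridPoint (k : ℕ) (I : ℤ) : lastIndex k (gridPoint k I) = I := by
  rw [lastIndex, gridPoint, show (2 : ℤ) ^ k * (2 * I + 1) - 2 ^ k = 2 * 2 ^ k * I by ring]
  exact Int.mul_ediv_cancel_left _ (by positivity)

lemma lastIndex_gridPoint_succ (k : ℕ) (I : ℤ) : lastIndex k (gridPoint (k + 1) I) = 2 * I := by
  have hk : (0 : ℤ) < 2 ^ k := by positivity
  rw [lastIndex, gridPoint, Int.ediv_eq_iff_of_pos (by positivity), pow_succ]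
  constructor <;> nlinarith

lemma two_mul_two_pow_dvd_sub_iff {k : ℕ} {x : ℤ} :
    2 * (2 : ℤ) ^ k ∣ x - 2 ^ k ↔ ∃ I, x = gridPoint k I := by
  refine exists_congr fun I => ?_
  rw [gridPoint, sub_eq_iff_eq_add]
  ring_nf

open Classical in
lemma lastIndex_eq (k : ℕ) (x : ℤ) :
    lastIndex k x = lastIndex k (x - 1) + if ∃ I, x = gridPoint k I then 1 else 0 := by
  rw [lastIndex, ediv_eq_sub_one_ediv_add_ite (by positivity), lastIndex, sub_right_comm]
  simp only [two_mul_two_pow_dvd_sub_iff]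

lemma lastIndex_sub_one {k : ℕ} {x : ℤ} (h : ¬ ∃ I, x = gridPoint k I) :
    lastIndex k (x - 1) = lastIndex k x := by
  rw [lastIndex_eq k x, if_neg h, add_zero]

lemma lastIndex_gridPoint_sub_one (k : ℕ) (I : ℤ) : lastIndex k (gridPoint k I - 1) = I - 1 := by
  have := lastIndex_eq k (gridPoint k I)
  rw [if_pos ⟨I, rfl⟩, lastIndex_gridPoint] at this
  omega

/-- The label of the `J`-th line of level `k` of the canonical skeleton. -/
def canonLabel (k : ℕ) (J : ℤ) : Label where
  phase := decide (J % 2 = 1)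
  mark := decide ((2 : ℤ) ^ k ∣ J)
  idx := ((J / 2 ^ k : ℤ) : ZMod 4)

lemma start_canonLabel_iff {k : ℕ} {J : ℤ} :
    (canonLabel k J).start = true ↔ 4 * (2 : ℤ) ^ k ∣ J := by
  rw [Label.start_eq_true_iff, canonLabel, decide_eq_true_iff,
    dvd_and_ediv_cast_eq_zero_iff (by positivity)]

variable {D D' : Type}

/-- The signal at `x` on a line of level `k` of the canonical skeleton which transports the data
`w`. The exponent `k - 1` in `carry` is irrelevant for `k = 0`, as odd lines carry no mark. -/
def canonSignal (k : ℕ) (w : ℤ → D) (x : ℤ) : Signal D where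
  inc := decide ((2 : ℤ) ^ k ∣ x)
  ch := ((2 * x / 2 ^ k : ℤ) : ZMod 8)
  carry := decide (4 * (2 : ℤ) ^ (k - 1) ∣ lastIndex (k - 1) x)
  tally := ((lastIndex k x / 2 ^ k : ℤ) : ZMod 4)
  wire := w (lastIndex k x)

/-- The signal on line zero, which has no level. -/
def blankSignal [Inhabited D] : Signal D := ⟨false, 0, false, 0, default⟩

/-- The canonical lines transporting, on the `J`-th line of level `k`, the data `W k J`. -/
noncomputable def canonLines [Inhabited D] (W : ℕ → ℤ → ℤ → D) : Lines D where
  label y := canonLabel (gridCoord y).1 (gridCoord y).2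
  sig x y := if y = 0 then blankSignal else
    canonSignal (gridCoord y).1 (W (gridCoord y).1 (gridCoord y).2) x

section Values

variable [Inhabited D] {W : ℕ → ℤ → ℤ → D} {k : ℕ} {J : ℤ}

lemma canonLines_label : (canonLines W).label (gridPoint k J) = canonLabel k J := by
  simp only [canonLines, gridCoord_gridPoint]

lemma canonLines_sig (x : ℤ) :
    (canonLines W).sig x (gridPoint k J) = canonSignal k (W k J) x := by
  simp only [canonLines, gridCoord_gridPoint, if_neg (gridPoint_ne_zero k J)]

lemma canonLines_sig_zero (x : ℤ) : (canonLines W).sig x 0 = blankSignal := by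
  simp only [canonLines, if_true]

lemma inc_canonLines_gridPoint {x : ℤ} :
    ((canonLines W).sig x (gridPoint k J)).inc = true ↔ (2 : ℤ) ^ k ∣ x := by
  rw [canonLines_sig, canonSignal, decide_eq_true_iff]

lemma inc_canonLines_iff {x y : ℤ} :
    ((canonLines W).sig x y).inc = true ↔ ∃ k J, y = gridPoint k J ∧ (2 : ℤ) ^ k ∣ x := by
  by_cases hy : y = 0
  · rw [hy, canonLines_sig_zero]
    simpa [blankSignal] using fun k J h => absurd h.symm (gridPoint_ne_zero k J)
  · obtain ⟨k, J, rfl⟩ := exists_eq_gridPoint hy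
    rw [inc_canonLines_gridPoint]
    refine ⟨fun h => ⟨k, J, rfl, h⟩, ?_⟩
    rintro ⟨j, I, h, hd⟩
    rwa [level_eq_of_gridPoint_eq h]

end Values

lemma intCast_zmod_eight_eq_iff (z w : ℤ) : (z : ZMod 8) = (w : ZMod 8) ↔ z % 8 = w % 8 :=
  ZMod.intCast_eq_intCast_iff z w 8

lemma isEven8_intCast_iff (z : ℤ) : IsEven8 (z : ZMod 8) ↔ z % 2 = 0 := by
  have := ZMod.val_intCast (n := 8) z
  unfold IsEven8
  omega

lemma two_mul_gridPoint_ediv (k d : ℕ) (I : ℤ) :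
    2 * gridPoint (k + d) I / 2 ^ k = 2 * (2 ^ d * (2 * I + 1)) := by
  rw [gridPoint, pow_add, mul_assoc, mul_left_comm]
  exact Int.mul_ediv_cancel_left _ (by positivity)

lemma ch_canonSignal_gridPoint_eq_four_iff {w : ℤ → D} {k d : ℕ} {J : ℤ} :
    (canonSignal k w (gridPoint (k + d) J)).ch = 4 ↔ d = 1 := by
  rw [canonSignal, two_mul_gridPoint_ediv, show (4 : ZMod 8) = ((4 : ℤ) : ZMod 8) by rfl,
    intCast_zmod_eight_eq_iff]
  match d with
  | 0 => omega
  | 1 => omega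
  | d + 2 =>
    rw [pow_add, show 2 * ((2 : ℤ) ^ d * 2 ^ 2 * (2 * J + 1)) = 8 * (2 ^ d * (2 * J + 1)) by ring]
    omega

lemma two_pow_dvd_iff {k : ℕ} {x : ℤ} :
    (2 : ℤ) ^ k ∣ x ↔ (2 : ℤ) ^ (k + 1) ∣ x ∨ ∃ I, x = gridPoint k I := by
  constructor
  · rintro ⟨u, rfl⟩
    obtain ⟨v, rfl⟩ | ⟨v, rfl⟩ := Int.even_or_odd u
    · exact .inl ⟨v, by ring⟩
    · exact .inr ⟨v, rfl⟩
  · rintro (h | ⟨I, rfl⟩)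
    · exact (pow_dvd_pow 2 k.le_succ).trans h
    · exact two_pow_dvd_gridPoint_iff.2 le_rfl

lemma two_mul_ediv_two_pow_succ (k : ℕ) (x : ℤ) : 2 * x / 2 ^ (k + 1) = x / 2 ^ k := by
  rw [pow_succ', Int.mul_ediv_mul_of_pos _ _ two_pos]

lemma ediv_two_pow_eq (k : ℕ) (x : ℤ) :
    x / 2 ^ k = (x - 1) / 2 ^ k + if (2 : ℤ) ^ k ∣ x then 1 else 0 :=
  ediv_eq_sub_one_ediv_add_ite (by positivity) x

lemma ch_canonSignal_of_meet (k : ℕ) (w : ℤ → D) (I : ℤ) :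
    ((canonSignal k w (gridPoint k I)).ch = 2 ∧ (canonLabel k I).phase = false) ∨
      ((canonSignal k w (gridPoint k I)).ch = 6 ∧ (canonLabel k I).phase = true) := by
  have ch := two_mul_gridPoint_ediv k 0 I
  simp only [add_zero, pow_zero, one_mul] at ch
  simp only [canonSignal, canonLabel, ch, decide_eq_true_iff, decide_eq_false_iff_not]
  rw [show (2 : ZMod 8) = ((2 : ℤ) : ZMod 8) by rfl, show (6 : ZMod 8) = ((6 : ℤ) : ZMod 8) by rfl,
    intCast_zmod_eight_eq_iff, intCast_zmod_eight_eq_iff]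
  omega

lemma ch_canonSignal_of_dvd {k : ℕ} {x : ℤ} (w : ℤ → D) (h : (2 : ℤ) ^ (k + 1) ∣ x) :
    (canonSignal k w x).ch = 0 ∨ (canonSignal k w x).ch = 4 := by
  obtain ⟨u, rfl⟩ := h
  have ch : 2 * (2 ^ (k + 1) * u) / (2 : ℤ) ^ k = 4 * u := by
    rw [show 2 * ((2 : ℤ) ^ (k + 1) * u) = 2 ^ k * (4 * u) by ring]
    exact Int.mul_ediv_cancel_left _ (by positivity)
  simp only [canonSignal, ch]
  rw [show (0 : ZMod 8) = ((0 : ℤ) : ZMod 8) by rfl, show (4 : ZMod 8) = ((4 : ℤ) : ZMod 8) by rfl,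
    intCast_zmod_eight_eq_iff, intCast_zmod_eight_eq_iff]
  omega

variable [Inhabited D] [Inhabited D'] {rel : D → D → Prop} {W : ℕ → ℤ → ℤ → D}
  {W' : ℕ → ℤ → ℤ → D'} {k : ℕ} {x y J : ℤ}

lemma meet_canonLines_iff :
    Meet ((canonLines W).sig x y) ((canonLines W').sig y x) ↔
      ∃ k I J, x = gridPoint k I ∧ y = gridPoint k J := by
  simp only [Meet, inc_canonLines_iff]
  constructor
  · rintro ⟨⟨k, J, rfl, hk⟩, j, I, rfl, hj⟩
    obtain rfl := le_antisymm (two_pow_dvd_gridPoint_iff.1 hk) (two_pow_dvd_gridPoint_iff.1 hj)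
    exact ⟨k, I, J, rfl, rfl⟩
  · rintro ⟨k, I, J, rfl, rfl⟩
    exact ⟨⟨k, J, rfl, two_pow_dvd_gridPoint_iff.2 le_rfl⟩, k, I, rfl,
      two_pow_dvd_gridPoint_iff.2 le_rfl⟩

lemma meet_canonLines_gridPoint_iff :
    Meet ((canonLines W).sig x (gridPoint k J)) ((canonLines W').sig (gridPoint k J) x) ↔
      ∃ I, x = gridPoint k I := by
  rw [meet_canonLines_iff]
  constructor
  · rintro ⟨j, I, J', rfl, h⟩
    exact ⟨I, by rw [level_eq_of_gridPoint_eq h]⟩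
  · rintro ⟨I, rfl⟩
    exact ⟨k, I, J, rfl, rfl⟩

lemma halfway_canonLines_iff :
    Halfway ((canonLines W).sig x (gridPoint k J)) ((canonLines W').sig (gridPoint k J) x) ↔
      ∃ j I, k = j + 1 ∧ x = gridPoint j I := by
  constructor
  · rintro ⟨hi, hi', hch⟩
    obtain ⟨j, I, rfl, hj⟩ := inc_canonLines_iff.1 hi'
    obtain ⟨d, rfl⟩ := Nat.exists_eq_add_of_le (two_pow_dvd_gridPoint_iff.1 hj)
    rw [canonLines_sig, ch_canonSignal_gridPoint_eq_four_iff] at hch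
    exact ⟨j, I, by rw [hch], rfl⟩
  · rintro ⟨j, I, rfl, rfl⟩
    refine ⟨?_, ?_, ?_⟩
    · rw [← Bool.not_eq_true, inc_canonLines_gridPoint, two_pow_dvd_gridPoint_iff]
      omega
    · rw [inc_canonLines_gridPoint, two_pow_dvd_gridPoint_iff]
      omega
    · rw [canonLines_sig, ch_canonSignal_gridPoint_eq_four_iff]

lemma ch_canonLines_of_meet
    (h : Meet ((canonLines W).sig x (gridPoint k J)) ((canonLines W').sig (gridPoint k J) x)) :
    (((canonLines W).sig x (gridPoint k J)).ch = 2 ∧ ((canonLines W').label x).phase = false) ∨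
      (((canonLines W).sig x (gridPoint k J)).ch = 6 ∧
        ((canonLines W').label x).phase = true) := by
  obtain ⟨I, rfl⟩ := meet_canonLines_gridPoint_iff.1 h
  rw [canonLines_sig, canonLines_label]
  exact ch_canonSignal_of_meet k _ I

lemma ch_canonLines_of_not_meet (h : ((canonLines W).sig x (gridPoint k J)).inc = true)
    (h' : ((canonLines W').sig (gridPoint k J) x).inc = false) :
    ((canonLines W).sig x (gridPoint k J)).ch = 0 ∨
      ((canonLines W).sig x (gridPoint k J)).ch = 4 := by
  have not_meet : ¬ ∃ I, x = gridPoint k I := by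
    rw [← meet_canonLines_gridPoint_iff (W := W) (W' := W') (J := J)]
    exact fun hm => Bool.false_ne_true (h'.symm.trans hm.2)
  rw [inc_canonLines_gridPoint, two_pow_dvd_iff, or_iff_left not_meet] at h
  rw [canonLines_sig]
  exact ch_canonSignal_of_dvd _ h

lemma canonLines_channelRule_zero :
    ChannelRule (Odd (gridPoint 0 J)) (Odd x) ((canonLines W').label x)
      ((canonLines W).sig x (gridPoint 0 J)) ((canonLines W).sig (x - 1) (gridPoint 0 J))
      ((canonLines W').sig (gridPoint 0 J) x) := by
  have odd : Odd (gridPoint 0 J) := odd_gridPoint_iff.2 rfl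
  have inc : ((canonLines W).sig x (gridPoint 0 J)).inc = true := by
    simp [inc_canonLines_gridPoint]
  have not_inc : ¬ Odd x → ((canonLines W').sig (gridPoint 0 J) x).inc = false := by
    intro hx
    rw [← Bool.not_eq_true]
    intro h
    obtain ⟨I, rfl⟩ := meet_canonLines_gridPoint_iff.1 ⟨inc, h⟩
    exact hx (odd_gridPoint_iff.2 rfl)
  refine ⟨fun _ => inc, fun _ => not_inc, fun _ => ?_, fun h => absurd odd h, fun h => absurd odd h,
    fun h => absurd odd h, ch_canonLines_of_meet, ch_canonLines_of_not_meet⟩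
  simp only [canonLines_sig, canonSignal, pow_zero, Int.ediv_one, isEven8_intCast_iff]
  exact ⟨by omega, by push_cast; ring⟩

lemma canonLines_channelRule_succ :
    ChannelRule (Odd (gridPoint (k + 1) J)) (Odd x) ((canonLines W').label x)
      ((canonLines W).sig x (gridPoint (k + 1) J))
      ((canonLines W).sig (x - 1) (gridPoint (k + 1) J))
      ((canonLines W').sig (gridPoint (k + 1) J) x) := by
  have not_odd : ¬ Odd (gridPoint (k + 1) J) := by simp [odd_gridPoint_iff]
  have halfway_iff := halfway_canonLines_iff (W := W) (W' := W') (k := k + 1) (x := x) (J := J)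
  have inc_iff := inc_canonLines_gridPoint (W := W) (k := k + 1) (x := x) (J := J)
  have ch_eq : ∀ x, ((canonLines W).sig x (gridPoint (k + 1) J)).ch = ((x / 2 ^ k : ℤ) : ZMod 8) :=
    fun x => by rw [canonLines_sig, canonSignal, two_mul_ediv_two_pow_succ]
  have step := ediv_two_pow_eq k x
  refine ⟨fun h => absurd h not_odd, fun h => absurd h not_odd, fun h => absurd h not_odd,
    fun _ hi => ?_, fun _ hh => ?_, fun _ hi hh => ?_, ch_canonLines_of_meet,
    ch_canonLines_of_not_meet⟩ <;> simp only [ch_eq, isEven8_intCast_iff]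
  · obtain ⟨u, rfl⟩ := inc_iff.1 hi
    rw [if_pos ((pow_dvd_pow 2 k.le_succ).mul_right u)] at step
    have quot : (2 : ℤ) ^ (k + 1) * u / 2 ^ k = 2 * u := by
      rw [pow_succ, mul_assoc]
      exact Int.mul_ediv_cancel_left _ (by positivity)
    exact ⟨by omega, by rw [step]; push_cast; ring⟩
  · obtain ⟨j, I, hj, rfl⟩ := halfway_iff.1 hh
    obtain rfl : k = j := by omega
    rw [if_pos (two_pow_dvd_gridPoint_iff.2 le_rfl)] at step
    have quot : gridPoint k I / 2 ^ k = 2 * I + 1 := Int.mul_ediv_cancel_left _ (by positivity)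
    exact ⟨by omega, by rw [step]; push_cast; ring⟩
  · have not_dvd : ¬ (2 : ℤ) ^ k ∣ x := by
      rw [two_pow_dvd_iff, ← inc_iff, hi, or_iff_right Bool.false_ne_true]
      exact fun ⟨I, hI⟩ => hh (halfway_iff.2 ⟨k, I, rfl, hI⟩)
    rw [if_neg not_dvd, add_zero] at step
    rw [step]

lemma canonLines_carryRule :
    CarryRule (Odd (gridPoint k J)) ((canonLines W').label x)
      ((canonLines W).sig x (gridPoint k J)) ((canonLines W).sig (x - 1) (gridPoint k J))
      ((canonLines W').sig (gridPoint k J) x) := by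
  have level : ¬ Odd (gridPoint k J) → ∃ h, k = h + 1 := by
    rw [odd_gridPoint_iff]
    exact Nat.exists_eq_succ_of_ne_zero
  have carry_iff : ∀ x, ((canonLines W).sig x (gridPoint k J)).carry =
      decide (4 * (2 : ℤ) ^ (k - 1) ∣ lastIndex (k - 1) x) := fun x => by
    rw [canonLines_sig, canonSignal]
  refine ⟨fun _ hh => ?_, fun hodd hh => ?_, fun hodd hm => ?_⟩ <;> simp only [carry_iff]
  · obtain ⟨h, I, rfl, rfl⟩ := halfway_canonLines_iff.1 hh
    rw [canonLines_label, Bool.eq_iff_iff, start_canonLabel_iff, decide_eq_true_iff,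
      Nat.add_sub_cancel, lastIndex_gridPoint]
  · obtain ⟨h, rfl⟩ := level hodd
    rw [Nat.add_sub_cancel, lastIndex_sub_one]
    exact fun ⟨I, hI⟩ => hh (halfway_canonLines_iff.2 ⟨h, I, rfl, hI⟩)
  · obtain ⟨h, rfl⟩ := level hodd
    obtain ⟨I, rfl⟩ := meet_canonLines_gridPoint_iff.1 hm
    have off_level : ¬ ∃ I', gridPoint (h + 1) I = gridPoint h I' := fun ⟨I', hI⟩ =>
      absurd (level_eq_of_gridPoint_eq hI) (Nat.succ_ne_self h)
    rw [canonLines_label, canonLabel, Nat.add_sub_cancel, lastIndex_sub_one off_level,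
      lastIndex_gridPoint_succ, show 4 * (2 : ℤ) ^ h = 2 * 2 ^ (h + 1) by ring]
    simp only [mul_dvd_mul_iff_left (two_ne_zero' ℤ)]

lemma canonLines_tallyRule :
    TallyRule ((canonLines W').label x)
      ((canonLines W).sig x (gridPoint k J)) ((canonLines W).sig (x - 1) (gridPoint k J))
      ((canonLines W').sig (gridPoint k J) x) := by
  refine ⟨fun hm => ?_, fun hm => ?_⟩ <;> simp only [canonLines_sig, canonSignal]
  · obtain ⟨I, rfl⟩ := meet_canonLines_gridPoint_iff.1 hm
    simp only [canonLines_label, canonLabel, lastIndex_gridPoint, lastIndex_gridPoint_sub_one,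
      decide_eq_true_iff, and_true]
    rw [ediv_two_pow_eq k I]
    push_cast
    rfl
  · rw [lastIndex_sub_one fun hI => hm (meet_canonLines_gridPoint_iff.2 hI)]

lemma canonLines_wireRule (h : ∀ I, ¬ 4 * (2 : ℤ) ^ k ∣ I → rel (W k J (I - 1)) (W k J I)) :
    WireRule rel ((canonLines W').label x)
      ((canonLines W).sig x (gridPoint k J)) ((canonLines W).sig (x - 1) (gridPoint k J))
      ((canonLines W').sig (gridPoint k J) x) := by
  refine ⟨fun hm hs => ?_, fun hm => ?_⟩ <;> simp only [canonLines_sig, canonSignal]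
  · obtain ⟨I, rfl⟩ := meet_canonLines_gridPoint_iff.1 hm
    rw [canonLines_label, ← Bool.not_eq_true, start_canonLabel_iff] at hs
    rw [lastIndex_gridPoint, lastIndex_gridPoint_sub_one]
    exact h I hs
  · rw [lastIndex_sub_one fun hI => hm (meet_canonLines_gridPoint_iff.2 hI)]

lemma ch_canonLines_at_zero (y : ℤ) : ((canonLines W).sig 0 y).ch = 0 := by
  by_cases hy : y = 0
  · rw [hy, canonLines_sig_zero, blankSignal]
  · obtain ⟨k, J, rfl⟩ := exists_eq_gridPoint hy
    simp [canonLines_sig, canonSignal]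

lemma phase_canonLines_of_start (y : ℤ) :
    ((canonLines W).label y).start = true → ((canonLines W).label y).phase = false := by
  simp only [canonLines, start_canonLabel_iff]
  intro h
  have := (dvd_mul_right 4 _).trans h
  simp only [canonLabel, decide_eq_false_iff_not]
  omega

lemma canonLines_lineRule_zero :
    LineRule rel (Odd (0 : ℤ)) (Odd x) ((canonLines W).label 0) ((canonLines W').label x)
      ((canonLines W).sig x 0) ((canonLines W).sig (x - 1) 0) ((canonLines W').sig 0 x) := by
  have not_inc : ((canonLines W).sig x 0).inc = false := by rw [canonLines_sig_zero, blankSignal]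
  have const : (canonLines W).sig x 0 = (canonLines W).sig (x - 1) 0 := by
    simp only [canonLines_sig_zero]
  have not_halfway : ¬ Halfway ((canonLines W).sig x 0) ((canonLines W').sig 0 x) := fun h => by
    rw [Halfway, ch_canonLines_at_zero] at h
    exact absurd h.2.2 (by decide)
  constructor
  case toChannelRule => constructor <;> simp_all
  case toCarryRule => constructor <;> simp_all
  case toTallyRule => constructor <;> simp_all
  case toWireRule => constructor <;> simp_all
  case phase_of_start => exact phase_canonLines_of_start 0

lemma canonLines_obeys (h : ∀ k J I, ¬ 4 * (2 : ℤ) ^ k ∣ I → rel (W k J (I - 1)) (W k J I)) :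
    (canonLines W).Obeys rel (canonLines W') := by
  intro x y
  by_cases hy : y = 0
  · rw [hy]
    exact canonLines_lineRule_zero
  · obtain ⟨k, J, rfl⟩ := exists_eq_gridPoint hy
    have channel : ChannelRule (Odd (gridPoint k J)) (Odd x) ((canonLines W').label x)
        ((canonLines W).sig x (gridPoint k J)) ((canonLines W).sig (x - 1) (gridPoint k J))
        ((canonLines W').sig (gridPoint k J) x) :=
      match k with
      | 0 => canonLines_channelRule_zero
      | k + 1 => canonLines_channelRule_succ
    exact ⟨channel, canonLines_carryRule, canonLines_tallyRule, canonLines_wireRule (h k J),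
      phase_canonLines_of_start _⟩

/-- The whole plane filled with boxes of side `4 * b` of data satisfying the constraints `S`. -/
structure DataSpec.IsFilling (S : DataSpec D) (ℓ : List ℕ) (b : ℤ) (d : ℤ → ℤ → D)
    (r : ℤ → ℤ → ℕ) : Prop where
  hor : ∀ {i} j, ¬ 4 * b ∣ i → S.hor (d (i - 1) j) (d i j)
  ver : ∀ i {j}, ¬ 4 * b ∣ j → S.ver (d i (j - 1)) (d i j)
  init : ∀ i {j}, 4 * b ∣ j → S.init (d i j)
  seed : ∀ {i j}, 4 * b ∣ j → 4 * b ∣ i - 2 * b → S.seed (d i j)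
  count : ∀ i j, (S.action (d i j)).Rule ℓ (r (i - 1) j) (r i j)

/-- The counter of the canonical configuration whose boxes of level `k` have the counter `f k`. -/
noncomputable def canonCount (f : ℕ → ℤ → ℤ → ℕ) (x y : ℤ) : ℕ :=
  if y = 0 then 0 else f (gridCoord y).1 (lastIndex (gridCoord y).1 x) (gridCoord y).2

lemma canonCount_gridPoint (f : ℕ → ℤ → ℤ → ℕ) (x : ℤ) (k : ℕ) (J : ℤ) :
    canonCount f x (gridPoint k J) = f k (lastIndex k x) J := by
  simp only [canonCount, gridCoord_gridPoint, if_neg (gridPoint_ne_zero k J)]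

lemma canonCount_le {f : ℕ → ℤ → ℤ → ℕ} {n : ℕ} (h : ∀ k i j, f k i j ≤ n) (x y : ℤ) :
    canonCount f x y ≤ n := by
  unfold canonCount
  split_ifs
  exacts [n.zero_le, h _ _ _]

lemma dvd_sub_of_canonLabel {k : ℕ} {I : ℤ} (hm : (canonLabel k I).mark = true)
    (hi : (canonLabel k I).idx = 2) : 4 * (2 : ℤ) ^ k ∣ I - 2 * 2 ^ k := by
  obtain ⟨u, rfl⟩ := of_decide_eq_true hm
  rw [canonLabel, Int.mul_ediv_cancel_left _ (by positivity),
    show (2 : ZMod 4) = ((2 : ℤ) : ZMod 4) by rfl, ZMod.intCast_eq_intCast_iff_dvd_sub,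
    ← dvd_neg, neg_sub] at hi
  rw [show (2 : ℤ) ^ k * u - 2 * 2 ^ k = (u - 2) * 2 ^ k by ring]
  exact mul_dvd_mul_right (by exact_mod_cast hi) _

lemma DataSpec.isConfig_canonLines {S : DataSpec D} {ℓ : List ℕ} {w : ℕ → ℤ → ℤ → D}
    {f : ℕ → ℤ → ℤ → ℕ} (h : ∀ k, S.IsFilling ℓ (2 ^ k) (w k) (f k)) :
    S.IsConfig ℓ (canonLines fun k J I => w k I J) (canonLines w) (canonCount f) := by
  have meet_point : ∀ {x y}, Meet ((canonLines fun k J I => w k I J).sig x y)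
      ((canonLines w).sig y x) → ∃ k I J, x = gridPoint k I ∧ y = gridPoint k J :=
    meet_canonLines_iff.1
  refine ⟨canonLines_obeys fun k J I => (h k).hor J, canonLines_obeys fun k I J => (h k).ver I,
    fun hm => ?_, fun hm => ?_, fun hm => ?_, fun hm => ?_, @fun x y hm => ?_⟩
  · obtain ⟨k, I, J, rfl, rfl⟩ := meet_point hm
    simp only [canonLines_sig, canonSignal, lastIndex_gridPoint]
  · obtain ⟨k, I, J, rfl, rfl⟩ := meet_point hm
    simp only [canonLines_label, start_canonLabel_iff, canonLines_sig, canonSignal,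
      lastIndex_gridPoint]
    exact (h k).init I
  · obtain ⟨k, I, J, rfl, rfl⟩ := meet_point hm
    simp only [canonLines_label, start_canonLabel_iff, canonLines_sig, canonSignal,
      lastIndex_gridPoint]
    exact fun hs hmark hi => (h k).seed hs (dvd_sub_of_canonLabel hmark hi)
  · obtain ⟨k, I, J, rfl, rfl⟩ := meet_point hm
    simp only [canonCount_gridPoint, canonLines_sig, canonSignal, lastIndex_gridPoint,
      lastIndex_gridPoint_sub_one]
    exact (h k).count I J
  · by_cases hy : y = 0
    · simp only [canonCount, if_pos hy]
    · obtain ⟨k, J, rfl⟩ := exists_eq_gridPoint hy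
      rw [meet_canonLines_gridPoint_iff] at hm
      rw [canonCount_gridPoint, canonCount_gridPoint, lastIndex_sub_one hm]

lemma mark_canonLines_of_odd {W : ℕ → ℤ → ℤ → D} {y : ℤ} (hy : Odd y) :
    ((canonLines W).label y).mark = true := by
  obtain ⟨J, rfl⟩ := hy
  rw [show 2 * J + 1 = gridPoint 0 J by simp [gridPoint], canonLines_label]
  simp [canonLabel]

end CanonicalConfiguration

section CounterTiles

/-- A tile system on the grid whose tiles act on a counter that runs along the rows. -/
structure CounterTiles (Z : Type) where
  hor : Z → Z → Prop
  ver : Z → Z → Prop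
  action : Z → CounterAction

/-- The plane can be tiled in such a way that the counter reads the word `ℓ`. -/
def CounterTiles.Tiles {Z : Type} (T : CounterTiles Z) (ℓ : List ℕ) : Prop :=
  ∃ (z : ℤ → ℤ → Z) (r : ℤ → ℤ → ℕ), ∀ x y, r x y ≤ ℓ.length ∧ T.hor (z (x - 1) y) (z x y) ∧
    T.ver (z x (y - 1)) (z x y) ∧ (T.action (z x y)).Rule ℓ (r (x - 1) y) (r x y)

/-- What a point of the plane carries in a hierarchical skeleton: the parities of its coordinates,
and the labels and signals of the row and of the column through it. -/
structure Cell (D : Type) where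
  oddRow : Bool
  oddCol : Bool
  row : Label
  col : Label
  rowSig : Signal D
  colSig : Signal D

instance {D : Type} [Finite D] : Finite (Cell D) := by
  have := Fintype.ofFinite D
  refine Finite.of_injective (fun c : Cell D =>
    (c.oddRow, c.oddCol, c.row, c.col, c.rowSig, c.colSig)) ?_
  rintro ⟨⟩ ⟨⟩ h
  simpa using h

variable {D : Type}

/-- The adjacency rule of horizontally adjacent cells. -/
structure DataSpec.HorRule (S : DataSpec D) (c₀ c : Cell D) : Prop where
  oddRow : c.oddRow = c₀.oddRow
  oddCol : c.oddCol = !c₀.oddCol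
  row : c.row = c₀.row
  line : LineRule S.hor (c.oddRow = true) (c.oddCol = true) c.row c.col c.rowSig c₀.rowSig c.colSig
  mark_row : c.oddRow = true → c.row.mark = true
  mark_col : c.oddCol = true → c.col.mark = true
  wire_eq : Meet c.rowSig c.colSig → c.rowSig.wire = c.colSig.wire
  init : Meet c.rowSig c.colSig → c.row.start = true → S.init c.rowSig.wire
  seed : Meet c.rowSig c.colSig → c.row.start = true → c.col.mark = true → c.col.idx = 2 →
    S.seed c.rowSig.wire

/-- The adjacency rule of vertically adjacent cells. -/
structure DataSpec.VerRule (S : DataSpec D) (c₀ c : Cell D) : Prop where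
  oddCol : c.oddCol = c₀.oddCol
  oddRow : c.oddRow = !c₀.oddRow
  col : c.col = c₀.col
  line : LineRule S.ver (c.oddCol = true) (c.oddRow = true) c.col c.row c.colSig c₀.colSig c.rowSig

/-- The tiles of the hierarchical skeletons whose wires satisfy the constraints `S`. -/
def DataSpec.tiles (S : DataSpec D) : CounterTiles (Cell D) where
  hor := S.HorRule
  ver := S.VerRule
  action c := if c.rowSig.inc && c.colSig.inc then S.action c.rowSig.wire else .pass

lemma DataSpec.tiles_action_of_meet {S : DataSpec D} {c : Cell D} (h : Meet c.rowSig c.colSig) :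
    S.tiles.action c = S.action c.rowSig.wire := by
  simp [tiles, h.1, h.2]

lemma DataSpec.tiles_action_of_not_meet {S : DataSpec D} {c : Cell D}
    (h : ¬ Meet c.rowSig c.colSig) : S.tiles.action c = .pass := by
  simpa [tiles] using fun h₁ h₂ => absurd ⟨h₁, h₂⟩ h

lemma eq_apply_zero_of_sub_one {α : Type*} {f : ℤ → α} (h : ∀ x, f x = f (x - 1)) (x : ℤ) :
    f x = f 0 := by
  induction x with
  | zero => rfl
  | succ i ih => rw [h, add_sub_cancel_right, ih]
  | pred i ih => rw [← h, ih]

variable {S : DataSpec D} {ℓ : List ℕ}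

/-- A tiling by hierarchical tiles whose parity marks are those of the coordinates. -/
structure DataSpec.IsTiling (S : DataSpec D) (ℓ : List ℕ) (z : ℤ → ℤ → Cell D) (r : ℤ → ℤ → ℕ) :
    Prop where
  hor : ∀ x y, S.HorRule (z (x - 1) y) (z x y)
  ver : ∀ x y, S.VerRule (z x (y - 1)) (z x y)
  action : ∀ x y, (S.tiles.action (z x y)).Rule ℓ (r (x - 1) y) (r x y)
  oddRow : ∀ x y, (z x y).oddRow = true ↔ Odd y
  oddCol : ∀ x y, (z x y).oddCol = true ↔ Odd x

lemma DataSpec.exists_isTiling_of_tiles (h : S.tiles.Tiles ℓ) : ∃ z r, S.IsTiling ℓ z r := by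
  obtain ⟨z, r, h⟩ := h
  have hor := fun x y => (h x y).2.1
  have ver := fun x y => (h x y).2.2.1
  have oddRow_eq := fun x y => eq_apply_zero_of_sub_one (f := fun x => (z x y).oddRow)
    (fun x => (hor x y).oddRow) x
  have oddCol_eq := fun x y => eq_apply_zero_of_sub_one (f := fun y => (z x y).oddCol)
    (fun y => (ver x y).oddCol) y
  obtain ⟨b, hb⟩ := exists_odd_iff_of_alternating (f := fun y => (z 0 y).oddRow) fun y => by
    rw [(ver 0 (y + 1)).oddRow, add_sub_cancel_right]
  obtain ⟨a, ha⟩ := exists_odd_iff_of_alternating (f := fun x => (z x 0).oddCol) fun x => by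
    rw [(hor (x + 1) 0).oddCol, add_sub_cancel_right]
  refine ⟨fun x y => z (x + a) (y + b), fun x y => r (x + a) (y + b), fun x y => ?_, fun x y => ?_,
    fun x y => ?_, fun x y => ?_, fun x y => ?_⟩
  · rw [sub_add_eq_add_sub]; exact hor _ _
  · rw [sub_add_eq_add_sub]; exact ver _ _
  · rw [sub_add_eq_add_sub]; exact (h _ _).2.2.2
  · rw [oddRow_eq]; exact hb y
  · rw [oddCol_eq]; exact ha x

lemma DataSpec.IsTiling.isConfig {z : ℤ → ℤ → Cell D} {r : ℤ → ℤ → ℕ} (h : S.IsTiling ℓ z r) :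
    S.IsConfig ℓ ⟨fun y => (z 0 y).row, fun x y => (z x y).rowSig⟩
      ⟨fun x => (z x 0).col, fun y x => (z x y).colSig⟩ r := by
  have row_eq := fun x y => eq_apply_zero_of_sub_one (f := fun x => (z x y).row)
    (fun x => (h.hor x y).row) x
  have col_eq := fun x y => eq_apply_zero_of_sub_one (f := fun y => (z x y).col)
    (fun y => (h.ver x y).col) y
  constructor
  case rows =>
    intro x y
    have := (h.hor x y).line
    rw [h.oddRow, h.oddCol, row_eq, col_eq] at this
    exact this
  case cols =>
    intro y x
    have := (h.ver x y).line
    rw [h.oddRow, h.oddCol, row_eq, col_eq] at this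
    exact this
  case wire_eq => exact fun hm => (h.hor _ _).wire_eq hm
  case init =>
    intro x y hm
    have := (h.hor x y).init hm
    rw [row_eq] at this
    exact this
  case seed =>
    intro x y hm
    have := (h.hor x y).seed hm
    rw [row_eq, col_eq] at this
    exact this
  case count =>
    intro x y hm
    have := h.action x y
    rw [tiles_action_of_meet hm] at this
    exact this
  case count_pass =>
    intro x y hm
    have := h.action x y
    rw [tiles_action_of_not_meet hm] at this
    exact this

lemma DataSpec.hasStage_of_tiles (h : S.tiles.Tiles ℓ) (k : ℕ) : S.HasStage ℓ k := by
  obtain ⟨z, r, h⟩ := exists_isTiling_of_tiles h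
  exact h.isConfig.hasStage
    (fun y hy => (h.hor 0 y).mark_row ((h.oddRow 0 y).2 hy))
    (fun x hx => (h.hor x 0).mark_col ((h.oddCol x 0).2 hx)) k

lemma DataSpec.IsConfig.tiles {R C : Lines D} {r : ℤ → ℤ → ℕ} (h : S.IsConfig ℓ R C r)
    (hR : ∀ y, Odd y → (R.label y).mark = true) (hC : ∀ x, Odd x → (C.label x).mark = true)
    (hr : ∀ x y, r x y ≤ ℓ.length) : S.tiles.Tiles ℓ := by
  have alternating : ∀ x : ℤ, decide (Odd x) = !decide (Odd (x - 1)) := fun x => by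
    rw [← decide_not, decide_eq_decide]
    grind
  refine ⟨fun x y => ⟨decide (Odd y), decide (Odd x), R.label y, C.label x, R.sig x y, C.sig y x⟩,
    r, fun x y => ⟨hr x y, ⟨rfl, alternating x, rfl, ?_, fun hy => hR y (of_decide_eq_true hy),
      fun hx => hC x (of_decide_eq_true hx), h.wire_eq, h.init, h.seed⟩,
      ⟨rfl, alternating y, rfl, ?_⟩, ?_⟩⟩
  · simpa only [decide_eq_true_iff] using h.rows x y
  · simpa only [decide_eq_true_iff] using h.cols y x
  · by_cases hm : Meet (R.sig x y) (C.sig y x)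
    · rw [DataSpec.tiles_action_of_meet hm]; exact h.count hm
    · rw [DataSpec.tiles_action_of_not_meet hm]; exact h.count_pass hm

theorem DataSpec.exists_isBox_of_tiles (h : S.tiles.Tiles ℓ) (k : ℕ) :
    ∃ d r, S.IsBox ℓ (2 ^ k) d r :=
  (hasStage_of_tiles h k).exists_isBox

theorem DataSpec.tiles_of_isFilling [Inhabited D] {w : ℕ → ℤ → ℤ → D} {f : ℕ → ℤ → ℤ → ℕ}
    (h : ∀ k, S.IsFilling ℓ (2 ^ k) (w k) (f k)) (hf : ∀ k i j, f k i j ≤ ℓ.length) :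
    S.tiles.Tiles ℓ :=
  (isConfig_canonLines h).tiles (fun _ => mark_canonLines_of_odd)
    (fun _ => mark_canonLines_of_odd) (canonCount_le hf)

end CounterTiles

section CellularAutomaton

/-- A one-dimensional cellular automaton with radius one. -/
structure CellularAutomaton (A : Type) where
  next : A → A → A → A
  halt : A → Prop

variable {A Γ : Type}

/-- The configurations at the times `0, 1, 2, …` when starting from `c`. -/
def CellularAutomaton.run (M : CellularAutomaton A) (c : ℤ → A) : ℕ → ℤ → A
  | 0 => c
  | t + 1 => fun P => M.next (M.run c t (P - 1)) (M.run c t P) (M.run c t (P + 1))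

/-- An encoding of the input words over `Γ` as configurations: the first letter is marked as the
position of a head. -/
structure InputTape (A Γ : Type) where
  blank : A
  head : Γ → A
  letter : Γ → A

/-- The configuration of the input word `w`. -/
def InputTape.config [Inhabited Γ] (T : InputTape A Γ) (w : List Γ) (P : ℤ) : A :=
  if P < 0 then T.blank else if P = 0 then T.head (w.getI 0) else T.letter (w.getI P.toNat)

/-- The role of a point of a space-time diagram: those at time zero read the input. -/
inductive Role (Γ : Type)
  | run
  | left
  | head (γ : Γ)
  | letter (γ : Γ)
deriving Fintype

/-- The roles that may follow each other from left to right. -/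
def Role.Precedes : Role Γ → Role Γ → Prop
  | run, run => True
  | left, left => True
  | left, head _ => True
  | head _, letter _ => True
  | letter _, letter _ => True
  | _, _ => False

/-- The content of a point of a space-time diagram, together with the contents of its two
neighbours. -/
structure Window (A Γ : Type) where
  left : A
  mid : A
  right : A
  role : Role Γ
deriving Fintype

/-- The content required by the role of a point at time zero. -/
def InputTape.Admits (T : InputTape A Γ) (a : A) : Role Γ → Prop
  | .run => False
  | .left => a = T.blank
  | .head γ => a = T.head γ
  | .letter γ => a = T.letter γ

/-- The constraints satisfied by the space-time diagrams which have not halted, for input words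
whose letters are coded by `code`. -/
def CellularAutomaton.spec (M : CellularAutomaton A) (T : InputTape A Γ) (code : Γ → ℕ) :
    DataSpec (Window A Γ) where
  hor d d' := d.mid = d'.left ∧ d.right = d'.mid ∧ d.role.Precedes d'.role
  ver d d' := d'.role = .run ∧ ¬ M.halt d.mid ∧ d'.mid = M.next d.left d.mid d.right
  init d := T.Admits d.mid d.role
  seed d := ∃ γ, d.role = .head γ
  action d := match d.role with
    | .run => .pass
    | .left => .reset
    | .head γ => .readFirst (code γ)
    | .letter γ => .readNext (code γ)

lemma Role.eq_left_of_precedes_head {ρ : Role Γ} {γ : Γ} (h : ρ.Precedes (.head γ)) :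
    ρ = .left := by
  cases ρ <;> first | rfl | exact h.elim

lemma Role.eq_left_of_precedes_left {ρ : Role Γ} (h : ρ.Precedes .left) : ρ = .left := by
  cases ρ <;> first | rfl | exact h.elim

lemma Role.eq_letter_of_precedes {ρ ρ' : Role Γ} (h : ρ.Precedes ρ')
    (hρ : ρ ≠ .run) (hρ' : ρ ≠ .left) : ∃ γ, ρ' = .letter γ := by
  cases ρ <;> cases ρ' <;> simp_all [Precedes]

variable {M : CellularAutomaton A} {T : InputTape A Γ} {code : Γ → ℕ} {w : List Γ} {ℓ : List ℕ}

lemma getD_map_code [Inhabited Γ] (h₀ : code default = 0) (w : List Γ) (p : ℕ) :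
    (w.map code).getD p 0 = code (w.getI p) := by
  rw [← h₀, List.getD_map]
  rfl

lemma getD_min_length (p : ℕ) : ℓ.getD (min p ℓ.length) 0 = ℓ.getD p 0 := by
  rcases le_total p ℓ.length with h | h
  · rw [min_eq_left h]
  · rw [min_eq_right h, List.getD_eq_default _ _ h, List.getD_eq_default _ _ le_rfl]

section Forcing

variable {b : ℤ} {d : ℤ → ℤ → Window A Γ} {r : ℤ → ℤ → ℕ}

lemma role_box_left (h : (M.spec T code).IsBox ℓ b d r) (n : ℕ) (hn : n < 2 * b) :
    (d (2 * b - 1 - n) 0).role = .left := by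
  have precedes := (h.hor (i := 2 * b - n) 0 (by linarith) (by linarith)).2.2
  rw [show 2 * b - n - 1 = 2 * b - 1 - n by ring] at precedes
  cases n with
  | zero =>
    obtain ⟨γ, hγ⟩ := h.seed
    rw [Nat.cast_zero, sub_zero (2 * b), hγ] at precedes
    exact Role.eq_left_of_precedes_head precedes
  | succ n =>
    have := role_box_left h n (by push_cast at hn; linarith)
    rw [show 2 * b - 1 - (n : ℤ) = 2 * b - (n + 1 : ℕ) by push_cast; ring] at this
    rw [this] at precedes
    exact Role.eq_left_of_precedes_left precedes

variable [Inhabited Γ]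

lemma role_box_middle (hcode : Function.Injective code) (h₀ : code default = 0)
    (h : (M.spec T code).IsBox (w.map code) b d r) :
    r (2 * b) 0 = 0 ∧ (d (2 * b) 0).role = .head (w.getI 0) := by
  obtain ⟨γ, hγ⟩ := h.seed
  have count := h.count (2 * b) 0
  simp only [CellularAutomaton.spec, hγ, CounterAction.Rule, getD_map_code h₀] at count
  rw [hγ, hcode count.2]
  exact ⟨count.1, rfl⟩

lemma role_box_right (hcode : Function.Injective code) (h₀ : code default = 0)
    (h : (M.spec T code).IsBox (w.map code) b d r) (p : ℕ) (hp : p < 2 * b) :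
    r (2 * b + p) 0 = min p (w.map code).length ∧
      (d (2 * b + p) 0).role = if p = 0 then .head (w.getI 0) else .letter (w.getI p) := by
  induction p with
  | zero => simpa using role_box_middle hcode h₀ h
  | succ p ih =>
    push_cast at hp ⊢
    obtain ⟨pos, role⟩ := ih (by linarith)
    have shift : 2 * b + (p + 1 : ℤ) - 1 = 2 * b + p := by ring
    have precedes := (h.hor (i := 2 * b + (p + 1)) 0 (by linarith) (by linarith)).2.2
    have count := h.count (2 * b + (p + 1)) 0
    rw [shift] at precedes count
    obtain ⟨γ, hγ⟩ := Role.eq_letter_of_precedes precedes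
      (by rw [role]; split_ifs <;> simp) (by rw [role]; split_ifs <;> simp)
    simp only [CellularAutomaton.spec, hγ, CounterAction.Rule, pos] at count
    have next : min (min p (w.map code).length + 1) (w.map code).length =
      min (p + 1) (w.map code).length := by omega
    rw [next] at count
    refine ⟨count.1, ?_⟩
    rw [count.1, getD_min_length, getD_map_code h₀] at count
    rw [hγ, hcode count.2]

lemma mid_box_zero (hcode : Function.Injective code) (h₀ : code default = 0)
    (h : (M.spec T code).IsBox (w.map code) b d r) {P : ℤ} (hP : |P| < 2 * b) :
    (d (2 * b + P) 0).mid = T.config w P := by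
  have admits : T.Admits (d (2 * b + P) 0).mid (d (2 * b + P) 0).role := h.init _
  rcases lt_or_ge P 0 with neg | nonneg
  · have role := role_box_left h (-P - 1).toNat (by rw [abs_of_neg neg] at hP; omega)
    rw [show 2 * b - 1 - ((-P - 1).toNat : ℤ) = 2 * b + P by omega] at role
    rw [role] at admits
    rw [InputTape.config, if_pos neg, admits]
  · lift P to ℕ using nonneg
    rw [Nat.abs_cast] at hP
    rw [(role_box_right hcode h₀ h P hP).2] at admits
    rw [InputTape.config, if_neg (by simp), Int.toNat_natCast]
    split_ifs at admits ⊢ <;> first | exact admits | simp_all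

lemma mid_box (hcode : Function.Injective code) (h₀ : code default = 0)
    (h : (M.spec T code).IsBox (w.map code) b d r) (t : ℕ) {P : ℤ} (hP : |P| + t < 2 * b) :
    (d (2 * b + P) t).mid = M.run (T.config w) t P := by
  induction t generalizing P with
  | zero => exact mid_box_zero hcode h₀ h (by simpa using hP)
  | succ t ih =>
    push_cast at hP ⊢
    have bounds := abs_lt.1 (show |P| < 2 * b - t - 1 by linarith)
    have left := (h.hor (i := 2 * b + P) t (by linarith) (by linarith)).1
    have right := (h.hor (i := 2 * b + P + 1) t (by linarith) (by linarith)).2.1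
    have up := (h.ver (2 * b + P) (j := t + 1) (by positivity) (by linarith)).2.2
    rw [add_sub_cancel_right] at right up
    have nearby : ∀ Q : ℤ, |Q - P| ≤ 1 → (d (2 * b + Q) t).mid = M.run (T.config w) t Q := by
      intro Q hQ
      have := abs_sub_abs_le_abs_sub Q P
      exact ih (by linarith)
    simp only [CellularAutomaton.run]
    rw [← nearby (P - 1) (by simp), ← nearby P (by simp), ← nearby (P + 1) (by simp),
      ← add_assoc, ← right, ← add_sub_assoc, left, up]

lemma not_halt_of_tiles (hcode : Function.Injective code) (h₀ : code default = 0)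
    (h : (M.spec T code).tiles.Tiles (w.map code)) (t : ℕ) (P : ℤ) :
    ¬ M.halt (M.run (T.config w) t P) := by
  obtain ⟨d, r, box⟩ := DataSpec.exists_isBox_of_tiles h (|P|.toNat + t + 1)
  set b : ℤ := 2 ^ (|P|.toNat + t + 1)
  have large : |P| + t + 1 < b := by
    have : |P|.toNat + t + 1 < 2 ^ (|P|.toNat + t + 1) := Nat.lt_two_pow_self
    zify at this
    rwa [Int.toNat_of_nonneg (abs_nonneg P)] at this
  have := abs_nonneg P
  have up := (box.ver (2 * b + P) (j := t + 1) (by positivity) (by linarith)).2.1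
  rwa [add_sub_cancel_right, mid_box hcode h₀ box t (by linarith)] at up

end Forcing

section Filling

variable [Inhabited Γ]

/-- The role of the point `(i, j)` in the box of side `4 * b` (repeated periodically) which holds
the space-time diagram of the input word `w`; the head starts in the middle of the bottom row. -/
def fillRole (w : List Γ) (b i j : ℤ) : Role Γ :=
  if ¬ 4 * b ∣ j then .run
  else if i % (4 * b) < 2 * b then .left
  else if i % (4 * b) = 2 * b then .head (w.getI 0)
  else .letter (w.getI (i % (4 * b) - 2 * b).toNat)

/-- The space-time diagram of the input word `w`, restricted to a box of side `4 * b` which is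
repeated periodically. -/
def CellularAutomaton.fill (M : CellularAutomaton A) (T : InputTape A Γ) (w : List Γ) (b i j : ℤ) :
    Window A Γ where
  left := M.run (T.config w) (j % (4 * b)).toNat (i % (4 * b) - 2 * b - 1)
  mid := M.run (T.config w) (j % (4 * b)).toNat (i % (4 * b) - 2 * b)
  right := M.run (T.config w) (j % (4 * b)).toNat (i % (4 * b) - 2 * b + 1)
  role := fillRole w b i j

/-- The counter which reads `w` from the middle of the bottom row of each box of side `4 * b`. -/
def fillCount (w : List Γ) (b i j : ℤ) : ℕ :=
  if 4 * b ∣ j then min (i % (4 * b) - 2 * b).toNat w.length else 0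

lemma emod_of_not_dvd {n i : ℤ} (hn : 0 < n) (h : ¬ n ∣ i) : i % n = (i - 1) % n + 1 := by
  have := Int.emod_nonneg i hn.ne'
  have := Int.emod_lt_of_pos i hn
  have : i % n ≠ 0 := fun h₀ => h (Int.dvd_of_emod_eq_zero h₀)
  have : (i - 1) % n = i % n - 1 := by
    rw [← Int.emod_sub_emod, Int.emod_eq_of_lt] <;> omega
  omega

lemma fill_hor {b : ℤ} (hb : 0 < b) {i : ℤ} (j : ℤ) (hi : ¬ 4 * b ∣ i) :
    (M.spec T code).hor (M.fill T w b (i - 1) j) (M.fill T w b i j) := by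
  have := emod_of_not_dvd (by linarith) hi
  refine ⟨?_, ?_, ?_⟩
  · simp only [CellularAutomaton.fill, this]; congr 1; ring
  · simp only [CellularAutomaton.fill, this]; congr 1; ring
  · simp only [CellularAutomaton.fill, fillRole, this]
    split_ifs <;> first | trivial | omega

lemma fill_ver {b : ℤ} (hb : 0 < b) (h : ∀ t P, ¬ M.halt (M.run (T.config w) t P)) (i : ℤ) {j : ℤ}
    (hj : ¬ 4 * b ∣ j) : (M.spec T code).ver (M.fill T w b i (j - 1)) (M.fill T w b i j) := by
  have := emod_of_not_dvd (by linarith) hj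
  have := Int.emod_nonneg (j - 1) (show 4 * b ≠ 0 by linarith)
  refine ⟨if_pos hj, h _ _, ?_⟩
  simp only [CellularAutomaton.fill]
  rw [show (j % (4 * b)).toNat = ((j - 1) % (4 * b)).toNat + 1 by omega]
  rfl

lemma fill_init (b i : ℤ) {j : ℤ} (hj : 4 * b ∣ j) :
    (M.spec T code).init (M.fill T w b i j) := by
  simp only [CellularAutomaton.spec, CellularAutomaton.fill, fillRole, Int.emod_eq_zero_of_dvd hj,
    Int.toNat_zero, CellularAutomaton.run, InputTape.config, hj, not_true, if_false]
  split_ifs <;> first | rfl | omega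

lemma fill_count (h₀ : code default = 0) {b : ℤ} (hb : 0 < b) (i j : ℤ) :
    ((M.spec T code).action (M.fill T w b i j)).Rule (w.map code) (fillCount w b (i - 1) j)
      (fillCount w b i j) := by
  by_cases hj : 4 * b ∣ j
  swap
  · simp only [CellularAutomaton.spec, CellularAutomaton.fill, fillRole, fillCount, hj,
      not_false_iff, if_true, if_false]
    rfl
  have := @emod_of_not_dvd (4 * b) i (by linarith)
  simp only [CellularAutomaton.spec, CellularAutomaton.fill, fillRole, fillCount, hj, not_true,
      if_true, if_false]
  rcases lt_trichotomy (i % (4 * b)) (2 * b) with hi | hi | hi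
  · simp only [if_pos hi, CounterAction.Rule]
    omega
  · simp only [hi, lt_irrefl, if_true, if_false, CounterAction.Rule, getD_map_code h₀]
    simp
  · have hd : ¬ 4 * b ∣ i := fun hd => by rw [Int.emod_eq_zero_of_dvd hd] at hi; linarith
    specialize this hd
    simp only [hi.not_gt, hi.ne', if_false, CounterAction.Rule]
    rw [← List.length_map (as := w) code, getD_min_length, getD_map_code h₀]
    refine ⟨?_, rfl⟩
    omega

lemma isFilling_fill (h₀ : code default = 0)
    (h : ∀ t P, ¬ M.halt (M.run (T.config w) t P)) {b : ℤ} (hb : 0 < b) :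
    (M.spec T code).IsFilling (w.map code) b (M.fill T w b) (fillCount w b) where
  hor := fill_hor hb
  ver := fill_ver hb h
  init := fill_init b
  seed {i j} hj hi := by
    have mid : i % (4 * b) = 2 * b := by
      have := Int.emod_eq_emod_iff_emod_sub_eq_zero.2 (Int.emod_eq_zero_of_dvd hi)
      rwa [Int.emod_eq_of_lt (a := 2 * b) (by linarith) (by linarith)] at this
    refine ⟨w.getI 0, ?_⟩
    simp only [CellularAutomaton.fill, fillRole, hj, mid, not_true, lt_irrefl, if_true, if_false]
  count := fill_count h₀ hb

end Filling

theorem CellularAutomaton.tiles_iff [Inhabited A] [Inhabited Γ] (hcode : Function.Injective code)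
    (h₀ : code default = 0) :
    (M.spec T code).tiles.Tiles (w.map code) ↔ ∀ t P, ¬ M.halt (M.run (T.config w) t P) := by
  refine ⟨not_halt_of_tiles hcode h₀, fun h => ?_⟩
  have : Inhabited (Window A Γ) := ⟨⟨default, default, default, .run⟩⟩
  refine DataSpec.tiles_of_isFilling (fun k => isFilling_fill h₀ h (by positivity))
    fun k i j => ?_
  unfold fillCount
  split_ifs <;> simp

end CellularAutomaton

section TuringMachine

open Turing StateTransition

section Evaluation

variable {A : Type} {M : CellularAutomaton A} {c c' : ℤ → A}

open Classical in
/-- The global map of a cellular automaton, as a state transition which is undefined on the halted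
configurations. -/
noncomputable def CellularAutomaton.step (M : CellularAutomaton A) (c : ℤ → A) :
    Option (ℤ → A) :=
  if ∃ P, M.halt (c P) then none
  else some fun P => M.next (c (P - 1)) (c P) (c (P + 1))

lemma CellularAutomaton.step_eq_none_iff : M.step c = none ↔ ∃ P, M.halt (c P) := by
  simp only [step, ite_eq_left_iff, reduceCtorEq, imp_false, not_not]

lemma CellularAutomaton.step_of_not_halt (h : ∀ P, ¬ M.halt (c P)) :
    M.step c = some fun P => M.next (c (P - 1)) (c P) (c (P + 1)) :=
  if_neg (not_exists.2 h)

lemma CellularAutomaton.exists_run_of_reaches (h : Reaches M.step c c') : ∃ t, c' = M.run c t := by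
  induction h with
  | refl => exact ⟨0, rfl⟩
  | tail _ hstep ih =>
    obtain ⟨t, rfl⟩ := ih
    simp only [step, Option.mem_ite_none_left, Option.mem_some] at hstep
    exact ⟨t + 1, hstep.2.symm⟩

lemma CellularAutomaton.reaches_run (h : ¬ (eval M.step c).Dom) (t : ℕ) :
    Reaches M.step c (M.run c t) ∧ ∀ P, ¬ M.halt (M.run c t P) := by
  have running : ∀ {c'}, Reaches M.step c c' → ∀ P, ¬ M.halt (c' P) := fun hr P hP =>
    h (Part.dom_iff_mem.2 ⟨_, mem_eval.2 ⟨hr, step_eq_none_iff.2 ⟨P, hP⟩⟩⟩)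
  induction t with
  | zero => exact ⟨.refl, running .refl⟩
  | succ t ih =>
    have reaches := ih.1.tail (step_of_not_halt ih.2)
    exact ⟨reaches, running reaches⟩

lemma CellularAutomaton.not_dom_eval_iff :
    ¬ (eval M.step c).Dom ↔ ∀ t P, ¬ M.halt (M.run c t P) := by
  refine ⟨fun h t => (reaches_run h t).2, fun h hdom => ?_⟩
  obtain ⟨c', hc'⟩ := Part.dom_iff_mem.1 hdom
  obtain ⟨reaches, halted⟩ := mem_eval.1 hc'
  obtain ⟨t, rfl⟩ := exists_run_of_reaches reaches
  obtain ⟨P, hP⟩ := step_eq_none_iff.1 halted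
  exact h t P hP

end Evaluation

variable {Γ Λ : Type} [Inhabited Γ]

/-- The cells of a configuration of a Turing machine whose head is at the position `p`. -/
def turingCells (c : TM0.Cfg Γ Λ) (p P : ℤ) : Γ × Option Λ :=
  (c.Tape.nth (P - p), if P = p then some c.q else none)

lemma turingCells_self (c : TM0.Cfg Γ Λ) (p : ℤ) :
    turingCells c p p = (c.Tape.head, some c.q) := by
  rw [turingCells, if_pos rfl, sub_self, Tape.nth_zero]

lemma turingCells_of_ne (c : TM0.Cfg Γ Λ) {p P : ℤ} (h : P ≠ p) :
    turingCells c p P = (c.Tape.nth (P - p), none) := by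
  rw [turingCells, if_neg h]

variable [Inhabited Λ]

/-- The state in which the head of a Turing machine leaves a cell in the direction `dir`. -/
def leavingState (M : TM0.Machine Γ Λ) (dir : Dir) (x : Γ × Option Λ) : Option Λ :=
  x.2.bind fun q =>
    match M q x.1 with
    | some (q', .move dir') => if dir' = dir then some q' else none
    | _ => none

/-- A Turing machine as a cellular automaton: a cell contains a symbol, and the state if the head
is there. -/
def turingAutomaton (M : TM0.Machine Γ Λ) : CellularAutomaton (Γ × Option Λ) where
  next l x r :=
    match x.2 with
    | none => (x.1, (leavingState M .right l).or (leavingState M .left r))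
    | some q =>
      match M q x.1 with
      | some (q', .write a) => (a, some q')
      | _ => (x.1, none)
  halt x := ∃ q, x.2 = some q ∧ M q x.1 = none

/-- The input words of a Turing machine. -/
def turingInput : InputTape (Γ × Option Λ) Γ where
  blank := (default, none)
  head γ := (γ, some default)
  letter γ := (γ, none)

variable {M : TM0.Machine Γ Λ}

lemma turingInput_config (w : List Γ) :
    turingInput.config w = turingCells (TM0.init (Λ := Λ) w) 0 := by
  funext P
  simp only [InputTape.config, turingInput, turingCells, TM0.init, Tape.mk₁, Tape.mk₂, sub_zero]
  rcases lt_or_ge P 0 with neg | nonneg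
  · obtain ⟨p, rfl⟩ := Int.eq_negSucc_of_lt_zero neg
    rw [if_pos neg, if_neg neg.ne]
    exact Prod.ext (by simp [Tape.nth, Tape.mk', ListBlank.nth_mk]) rfl
  · lift P to ℕ using nonneg
    rw [if_neg (by simp), Tape.mk'_nth_nat, ListBlank.nth_mk, Int.toNat_natCast]
    rcases eq_or_ne P 0 with rfl | h
    · rfl
    · rw [if_neg (mod_cast h), if_neg (mod_cast h)]

lemma turingCells_halt_iff {c : TM0.Cfg Γ Λ} {p : ℤ} :
    (∃ P, (turingAutomaton M).halt (turingCells c p P)) ↔ M c.q c.Tape.head = none := by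
  constructor
  · rintro ⟨P, q, hq, halt⟩
    have : P = p := by
      by_contra h
      simp [turingCells_of_ne c h] at hq
    subst this
    rw [turingCells_self] at hq halt
    rwa [Option.some_injective _ hq]
  · intro h
    refine ⟨p, c.q, ?_⟩
    rw [turingCells_self]
    exact ⟨rfl, h⟩

lemma leavingState_turingCells_of_ne (M : TM0.Machine Γ Λ) (dir : Dir) (c : TM0.Cfg Γ Λ) {p P : ℤ}
    (h : P ≠ p) : leavingState M dir (turingCells c p P) = none := by
  rw [turingCells_of_ne c h]
  rfl

lemma leavingState_turingCells_self (M : TM0.Machine Γ Λ) (dir : Dir) (c : TM0.Cfg Γ Λ) (p : ℤ) :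
    leavingState M dir (turingCells c p p) =
      match M c.q c.Tape.head with
      | some (q', .move dir') => if dir' = dir then some q' else none
      | _ => none := by
  rw [turingCells_self]
  rfl

lemma turingAutomaton_next_self (M : TM0.Machine Γ Λ) (x y : Γ × Option Λ) (c : TM0.Cfg Γ Λ)
    (p : ℤ) : (turingAutomaton M).next x (turingCells c p p) y =
      match M c.q c.Tape.head with
      | some (q', .write a) => (a, some q')
      | _ => (c.Tape.head, none) := by
  rw [turingCells_self]
  rfl

lemma turingAutomaton_next_of_ne (M : TM0.Machine Γ Λ) (c : TM0.Cfg Γ Λ) {p P : ℤ} (h : P ≠ p) :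
    (turingAutomaton M).next (turingCells c p (P - 1)) (turingCells c p P)
      (turingCells c p (P + 1)) = (c.Tape.nth (P - p),
        (leavingState M .right (turingCells c p (P - 1))).or
          (leavingState M .left (turingCells c p (P + 1)))) := by
  rw [turingCells_of_ne c h]
  rfl

lemma turingAutomaton_next_write {c : TM0.Cfg Γ Λ} {q : Λ} {a : Γ}
    (h : M c.q c.Tape.head = some (q, .write a)) (p P : ℤ) :
    (turingAutomaton M).next (turingCells c p (P - 1)) (turingCells c p P)
      (turingCells c p (P + 1)) = turingCells ⟨q, c.Tape.write a⟩ p P := by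
  have stays : ∀ dir P, leavingState M dir (turingCells c p P) = none := fun dir P => by
    rcases eq_or_ne P p with rfl | hP
    · rw [leavingState_turingCells_self, h]
    · exact leavingState_turingCells_of_ne M dir c hP
  rcases eq_or_ne P p with rfl | hP
  · rw [turingAutomaton_next_self, h, turingCells_self]
    rfl
  · rw [turingAutomaton_next_of_ne M c hP, stays, stays, turingCells_of_ne _ hP, Tape.write_nth,
      if_neg (sub_ne_zero.2 hP)]
    rfl

lemma turingAutomaton_next_left {c : TM0.Cfg Γ Λ} {q : Λ}
    (h : M c.q c.Tape.head = some (q, .move .left)) (p P : ℤ) :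
    (turingAutomaton M).next (turingCells c p (P - 1)) (turingCells c p P)
      (turingCells c p (P + 1)) = turingCells ⟨q, c.Tape.move .left⟩ (p - 1) P := by
  have symbol : (c.Tape.move .left).nth (P - (p - 1)) = c.Tape.nth (P - p) := by
    rw [Tape.move_left_nth]; congr 1; ring
  rcases eq_or_ne P p with rfl | hP
  · rw [turingAutomaton_next_self, h, turingCells_of_ne _ (by omega), symbol, sub_self,
      Tape.nth_zero]
  have not_right : leavingState M .right (turingCells c p (P - 1)) = none := by
    rcases eq_or_ne (P - 1) p with hp | hp
    · rw [hp, leavingState_turingCells_self, h]; rfl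
    · exact leavingState_turingCells_of_ne M _ c hp
  rw [turingAutomaton_next_of_ne M c hP, not_right, Option.none_or]
  rcases eq_or_ne (P + 1) p with rfl | hp
  · rw [leavingState_turingCells_self, h, turingCells, if_pos (by ring), symbol]
    rfl
  · rw [leavingState_turingCells_of_ne M _ c hp, turingCells_of_ne _ (by omega), symbol]

lemma turingAutomaton_next_right {c : TM0.Cfg Γ Λ} {q : Λ}
    (h : M c.q c.Tape.head = some (q, .move .right)) (p P : ℤ) :
    (turingAutomaton M).next (turingCells c p (P - 1)) (turingCells c p P)
      (turingCells c p (P + 1)) = turingCells ⟨q, c.Tape.move .right⟩ (p + 1) P := by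
  have symbol : (c.Tape.move .right).nth (P - (p + 1)) = c.Tape.nth (P - p) := by
    rw [Tape.move_right_nth]; congr 1; ring
  rcases eq_or_ne P p with rfl | hP
  · rw [turingAutomaton_next_self, h, turingCells_of_ne _ (by omega), symbol, sub_self,
      Tape.nth_zero]
  have not_left : leavingState M .left (turingCells c p (P + 1)) = none := by
    rcases eq_or_ne (P + 1) p with hp | hp
    · rw [hp, leavingState_turingCells_self, h]; rfl
    · exact leavingState_turingCells_of_ne M _ c hp
  rw [turingAutomaton_next_of_ne M c hP, not_left, Option.or_none]
  rcases eq_or_ne (P - 1) p with rfl | hp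
  · rw [leavingState_turingCells_self, h, turingCells, if_pos (by ring), symbol]
    rfl
  · rw [leavingState_turingCells_of_ne M _ c hp, turingCells_of_ne _ (by omega), symbol]

lemma turingAutomaton_step {c : TM0.Cfg Γ Λ} {p : ℤ} {s : Λ × TM0.Stmt Γ}
    (h : M c.q c.Tape.head = some s) : (turingAutomaton M).step (turingCells c p) =
      some fun P => (turingAutomaton M).next (turingCells c p (P - 1)) (turingCells c p P)
        (turingCells c p (P + 1)) := by
  refine CellularAutomaton.step_of_not_halt fun P hP => ?_
  have := turingCells_halt_iff.1 ⟨P, hP⟩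
  simp [h] at this

lemma turingAutomaton_respects :
    Respects (TM0.step M) (turingAutomaton M).step (fun c a => ∃ p, a = turingCells c p) := by
  rintro ⟨q, T⟩ _ ⟨p, rfl⟩
  unfold TM0.step
  rcases hM : M q T.head with _ | ⟨q', stmt⟩
  · simp only [hM, Option.map_none, CellularAutomaton.step_eq_none_iff, turingCells_halt_iff]
  · simp only [hM, Option.map_some]
    have step := turingAutomaton_step (c := ⟨q, T⟩) (p := p) hM
    match stmt with
    | .move .left =>
      exact ⟨_, ⟨p - 1, rfl⟩, .single (step.trans (congrArg some
        (funext (turingAutomaton_next_left (c := ⟨q, T⟩) hM p))))⟩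
    | .move .right =>
      exact ⟨_, ⟨p + 1, rfl⟩, .single (step.trans (congrArg some
        (funext (turingAutomaton_next_right (c := ⟨q, T⟩) hM p))))⟩
    | .write a =>
      exact ⟨_, ⟨p, rfl⟩, .single (step.trans (congrArg some
        (funext (turingAutomaton_next_write (c := ⟨q, T⟩) hM p))))⟩

theorem turingAutomaton_tiles_iff (M : TM0.Machine Γ Λ) {code : Γ → ℕ}
    (hcode : Function.Injective code) (h₀ : code default = 0) (w : List Γ) :
    ((turingAutomaton M).spec turingInput code).tiles.Tiles (w.map code) ↔
      ¬ (TM0.eval M w).Dom := by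
  have dom := tr_eval_dom turingAutomaton_respects (a₁ := TM0.init w) (f₁ := TM0.step M)
    ⟨0, turingInput_config w⟩
  rw [CellularAutomaton.tiles_iff hcode h₀, ← CellularAutomaton.not_dom_eval_iff, dom]
  rfl

end TuringMachine

section PrimitiveRecursion

variable {α β : Type*} [Primcodable α] [Primcodable β]

lemma primrecPred_const (p : Prop) : PrimrecPred fun _ : α => p := by
  classical exact (Primrec.const (decide p)).primrecPred

lemma primrecPred_of_finite {ι : Type*} [Finite ι] [Primcodable ι] (p : ι → Prop) :
    PrimrecPred p := by
  classical exact (Primrec.dom_finite fun i => decide (p i)).primrecPred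

lemma primrecPred_forall {ι : Type*} [Finite ι] {p : ι → α → Prop} (h : ∀ i, PrimrecPred (p i)) :
    PrimrecPred fun x => ∀ i, p i x := by
  classical
  have := Fintype.ofFinite ι
  suffices ∀ F : Finset ι, PrimrecPred fun x => ∀ i ∈ F, p i x from
    (this Finset.univ).of_eq fun x => by simp
  intro F
  induction F using Finset.induction_on with
  | empty => exact (primrecPred_const True).of_eq fun x => by simp
  | insert i F _ ih => exact ((h i).and ih).of_eq fun x => by simp

lemma primrecPred_imp {p q : α → Prop} (hp : PrimrecPred p) (hq : PrimrecPred q) :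
    PrimrecPred fun x => p x → q x :=
  (hp.not.or hq).of_eq fun _ => imp_iff_not_or.symm

lemma primrecPred_finite_comp {ι : Type*} [Finite ι] [Primcodable ι] {p : ι → α → Prop}
    (h : ∀ i, PrimrecPred (p i)) {f : α → ι} (hf : Primrec f) : PrimrecPred fun x => p (f x) x :=
  (primrecPred_forall fun i => primrecPred_imp (Primrec.eq.comp hf (.const i)) (h i)).of_eq
    fun _ => forall_eq'

lemma primrec_product {f : α → List β} {γ : Type*} [Primcodable γ] {g : α → List γ}
    (hf : Primrec f) (hg : Primrec g) : Primrec fun x => f x ×ˢ g x :=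
  Primrec.list_flatMap hf (Primrec.list_map (hg.comp .fst) (Primrec.snd.comp .fst |>.pair .snd))

lemma primrecRel_list_mem :
    PrimrecRel fun (x : α) (l : List α) => x ∈ l :=
  (PrimrecRel.exists_mem_list Primrec.eq).swap.of_eq fun _ _ => by simp [Function.swap]

end PrimitiveRecursion

section Tilesets

variable {α β G : Type*} [Group G] {s : ℕ} {Sf : Fin s → G}

open Classical in
/-- The tileset, with the indices in `L` as colours, of the triples in `L × Fin s × L` which
satisfy `R`. -/
noncomputable def tileList (L : List β) (R : β × Fin s × β → Prop) : List (ℕ × ℕ × ℕ) :=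
  ((L ×ˢ List.finRange s ×ˢ L).filter fun t => R t).map fun t =>
    (L.idxOf t.1, (t.2.1 : ℕ), L.idxOf t.2.2)

lemma tileable_tileList_iff {L : List β} {R : β × Fin s × β → Prop} :
    Tileable Sf L.length (tileList L R) ↔
      ∃ a : G → β, (∀ g, a g ∈ L) ∧ ∀ g i, R (a g, i, a (g * Sf i)) := by
  classical
  constructor
  · rintro ⟨c, hc, h⟩
    refine ⟨fun g => L[c g]'(hc g), fun g => List.getElem_mem _, fun g i => ?_⟩
    obtain ⟨⟨b, j, b'⟩, hR, heq⟩ := List.mem_map.1 (h g i)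
    replace hR : R (b, j, b') := by simpa using (List.mem_filter.1 hR).2
    simp only [Prod.mk.injEq, Fin.val_inj] at heq
    obtain ⟨hcb, rfl, hcb'⟩ := heq
    simpa [← hcb, ← hcb'] using hR
  · rintro ⟨a, ha, h⟩
    refine ⟨fun g => L.idxOf (a g), fun g => List.idxOf_lt_length_of_mem (ha g), fun g i =>
      List.mem_map.2 ⟨(a g, i, a (g * Sf i)), List.mem_filter.2 ⟨?_, ?_⟩, rfl⟩⟩
    · simp [ha]
    · simpa using h g i

variable [Primcodable α] [Primcodable β]

lemma primrec_tileList {L : α → List β} {R : α → β × Fin s × β → Prop} (hL : Primrec L)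
    (hR : PrimrecRel R) : Primrec fun x => tileList (L x) (R x) := by
  classical
  have index : ∀ {f : α × β × Fin s × β → β}, Primrec f →
      Primrec fun p => (L p.1).idxOf (f p) := fun hf =>
    Primrec.list_idxOf.comp hf (hL.comp .fst)
  exact Primrec.list_map
    (hR.swap.listFilter.comp (primrec_product hL (primrec_product (.const _) hL)) .id)
    ((index (Primrec.fst.comp .snd)).pair <|
      (Primrec.fin_val.comp (Primrec.fst.comp (Primrec.snd.comp .snd))).pair
        (index (Primrec.snd.comp (Primrec.snd.comp .snd))))

lemma DominoDecidable.computablePred_exists (h : DominoDecidable Sf) {L : α → List β}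
    {R : α → β × Fin s × β → Prop} (hL : Primrec L) (hR : PrimrecRel R) :
    ComputablePred fun x =>
      ∃ a : G → β, (∀ g, a g ∈ L x) ∧ ∀ g i, R x (a g, i, a (g * Sf i)) := by
  obtain ⟨f, hf, hfT⟩ := h
  refine ComputablePred.computable_iff.2 ⟨fun x => f ((L x).length, tileList (L x) (R x)),
    hf.comp ((Primrec.list_length.comp hL).pair (primrec_tileList hL hR)).to_comp, ?_⟩
  funext x
  rw [hfT, tileable_tileList_iff]

end Tilesets

/-- The generators of the grid. -/
def gridGens : Fin 2 → Multiplicative (ℤ × ℤ) :=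
  ![Multiplicative.ofAdd (1, 0), Multiplicative.ofAdd (0, 1)]

section CounterTilesDomino

variable {α : Type*} [Primcodable α] {Z : Type}

lemma primrecPred_counterActionRule (a : CounterAction) {ℓ : α → List ℕ} {r₀ r : α → ℕ}
    (hℓ : Primrec ℓ) (hr₀ : Primrec r₀) (hr : Primrec r) :
    PrimrecPred fun x => a.Rule (ℓ x) (r₀ x) (r x) := by
  have reads : ∀ σ {f : α → ℕ}, Primrec f → PrimrecPred fun x => (ℓ x).getD (f x) 0 = σ :=
    fun σ _ hf => Primrec.eq.comp ((Primrec.list_getD 0).comp hℓ hf) (.const σ)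
  cases a with
  | pass => exact Primrec.eq.comp hr hr₀
  | reset => exact Primrec.eq.comp hr (.const 0)
  | readFirst σ => exact (Primrec.eq.comp hr (.const 0)).and (reads σ (.const 0))
  | readNext σ =>
    exact (Primrec.eq.comp hr (Primrec.nat_min.comp (Primrec.succ.comp hr₀)
      (Primrec.list_length.comp hℓ))).and (reads σ hr)

/-- The constraints of `T` on two neighbouring pairs of a tile and a counter, the second being to
the right of the first one if `t.2.1 = 0` and above it if `t.2.1 = 1`. -/
def CounterTiles.TileRule (T : CounterTiles Z) (ℓ : List ℕ)
    (t : (Z × ℕ) × Fin 2 × (Z × ℕ)) : Prop :=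
  (t.2.1 = 0 → T.hor t.1.1 t.2.2.1 ∧ (T.action t.2.2.1).Rule ℓ t.1.2 t.2.2.2) ∧
    (t.2.1 = 1 → T.ver t.1.1 t.2.2.1)

lemma CounterTiles.primrecRel_tileRule [Finite Z] [Primcodable Z] (T : CounterTiles Z)
    {ℓ : α → List ℕ} (hℓ : Primrec ℓ) : PrimrecRel fun x t => T.TileRule (ℓ x) t := by
  have tiles : Primrec fun p : α × (Z × ℕ) × Fin 2 × (Z × ℕ) => (p.2.1.1, p.2.2.1, p.2.2.2.1) :=
    (Primrec.fst.comp (Primrec.fst.comp .snd)).pair <|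
      (Primrec.fst.comp (Primrec.snd.comp .snd)).pair
        (Primrec.fst.comp (Primrec.snd.comp (Primrec.snd.comp .snd)))
  refine primrecPred_finite_comp (p := fun (c : Z × Fin 2 × Z) p =>
    (c.2.1 = 0 → T.hor c.1 c.2.2 ∧ (T.action c.2.2).Rule (ℓ p.1) p.2.1.2 p.2.2.2.2) ∧
      (c.2.1 = 1 → T.ver c.1 c.2.2)) (fun c => ?_) tiles
  exact (primrecPred_imp (primrecPred_const _) <| (primrecPred_const _).and <|
    primrecPred_counterActionRule _ (hℓ.comp .fst) (Primrec.snd.comp (Primrec.fst.comp .snd))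
      (Primrec.snd.comp (Primrec.snd.comp (Primrec.snd.comp .snd)))).and (primrecPred_const _)

lemma CounterTiles.tiles_iff_exists_coloring (T : CounterTiles Z) (ℓ : List ℕ) :
    T.Tiles ℓ ↔ ∃ a : Multiplicative (ℤ × ℤ) → Z × ℕ, (∀ g, (a g).2 ≤ ℓ.length) ∧
      ∀ g i, T.TileRule ℓ (a g, i, a (g * gridGens i)) := by
  constructor
  · rintro ⟨z, r, h⟩
    refine ⟨fun g => (z g.toAdd.1 g.toAdd.2, r g.toAdd.1 g.toAdd.2), fun g => (h _ _).1,
      fun g i => ⟨?_, ?_⟩⟩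
    · rintro (rfl : i = 0)
      have := h (g.toAdd.1 + 1) g.toAdd.2
      rw [add_sub_cancel_right] at this
      simpa [gridGens] using ⟨this.2.1, this.2.2.2⟩
    · rintro (rfl : i = 1)
      have := (h g.toAdd.1 (g.toAdd.2 + 1)).2.2.1
      rw [add_sub_cancel_right] at this
      simpa [gridGens] using this
  · rintro ⟨a, ha, h⟩
    refine ⟨fun x y => (a (.ofAdd (x, y))).1, fun x y => (a (.ofAdd (x, y))).2, fun x y => ?_⟩
    have right := (h (.ofAdd (x - 1, y)) 0).1 rfl
    have up := (h (.ofAdd (x, y - 1)) 1).2 rfl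
    simp only [Fin.isValue, gridGens, Matrix.cons_val_zero, Matrix.cons_val_one,
      Matrix.cons_val_fin_one, ← ofAdd_add, Prod.mk_add_mk, sub_add_cancel, add_zero] at right up
    exact ⟨ha _, right.1, up, right.2⟩

lemma CounterTiles.computablePred_tiles [Finite Z] (T : CounterTiles Z)
    (h : DominoDecidable gridGens) {ℓ : α → List ℕ} (hℓ : Primrec ℓ) :
    ComputablePred fun x => T.Tiles (ℓ x) := by
  obtain ⟨n, ⟨e⟩⟩ := Finite.exists_equiv_fin Z
  let : Primcodable Z := .ofEquiv _ e
  let L : α → List (Z × ℕ) := fun x =>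
    (List.finRange n).map e.symm ×ˢ List.range ((ℓ x).length + 1)
  have hL : Primrec L := primrec_product (.const _)
    (Primrec.list_range.comp (Primrec.succ.comp (Primrec.list_length.comp hℓ)))
  have mem_L : ∀ x c, c ∈ L x ↔ c.2 ≤ (ℓ x).length := fun x c => by
    have : ∃ i, e.symm i = c.1 := e.symm.surjective _
    rw [List.mem_product]
    simpa [Nat.lt_succ_iff] using fun _ => this
  refine (h.computablePred_exists hL (T.primrecRel_tileRule hℓ)).of_eq fun x => ?_
  simp only [mem_L, T.tiles_iff_exists_coloring]

end CounterTilesDomino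

section Berger

open Turing PartrecToTM2

lemma TM0_exists_finite_states {Γ Λ : Type} [Inhabited Γ] [Inhabited Λ] (M : TM0.Machine Γ Λ)
    {S : Set Λ} (hS : S.Finite) (supports : TM0.Supports M S) :
    ∃ (Λ' : Type) (_ : Finite Λ') (_ : Inhabited Λ') (M' : TM0.Machine Γ Λ'),
      ∀ w, (TM0.eval M' w).Dom ↔ (TM0.eval M w).Dom := by
  classical
  let : Inhabited S := ⟨⟨default, supports.1⟩⟩
  let restrict : PointedMap Λ S :=
    ⟨fun q => if h : q ∈ S then ⟨q, h⟩ else default, dif_pos supports.1⟩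
  let same : PointedMap Γ Γ := ⟨id, rfl⟩
  have restrict_val : ∀ q ∈ S, (restrict q : Λ) = q := fun q hq =>
    congrArg Subtype.val (dif_pos hq)
  refine ⟨S, hS, inferInstance, TM0.Machine.map M same same restrict Subtype.val, fun w => ?_⟩
  have init : TM0.Cfg.map same restrict (TM0.init w) = TM0.init w := by
    rw [TM0.map_init]
    exact congrArg _ (List.map_id w)
  exact StateTransition.tr_eval_dom (TM0.Machine.map_respects M _ _ restrict Subtype.val supports
    (fun _ => rfl) restrict_val) ⟨supports.1, init⟩

lemma exists_injective_code (Γ : Type*) [Finite Γ] [Inhabited Γ] :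
    ∃ code : Γ → ℕ, Function.Injective code ∧ code default = 0 := by
  obtain ⟨n, ⟨e⟩⟩ := Finite.exists_equiv_fin Γ
  refine ⟨fun x => Equiv.swap (e default : ℕ) 0 (e x), ?_, Equiv.swap_apply_left _ _⟩
  exact (Equiv.injective _).comp (Fin.val_injective.comp e.injective)

lemma trNat_bit (b : Bool) {k : ℕ} (h : Nat.bit b k ≠ 0) :
    trNat (Nat.bit b k) = (bif b then Γ'.bit1 else Γ'.bit0) :: trNat k := by
  have cast : ((Nat.bit b k : ℕ) : Num) = (bif b then Num.bit1 else Num.bit0) (k : Num) := by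
    simp only [← Num.ofNat'_eq, Num.ofNat'_bit]
  rw [trNat, trNat, cast]
  rcases hk : (k : Num) with _ | p
  · obtain rfl : k = 0 := by simpa using congrArg (fun x : Num => (x : ℕ)) hk
    cases b with
    | false => exact absurd rfl h
    | true => rfl
  · cases b <;> rfl

lemma trNat_of_ne_zero {n : ℕ} (hn : n ≠ 0) :
    trNat n = (if n % 2 = 0 then Γ'.bit0 else Γ'.bit1) :: trNat (n / 2) := by
  rw [← Nat.bit_bodd_div2 n] at hn
  have := trNat_bit n.bodd hn
  rw [Nat.bit_bodd_div2, Nat.div2_val] at this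
  rw [this, Nat.mod_two_of_bodd]
  cases n.bodd <;> rfl

lemma primrec_map_trNat (code : Γ' → ℕ) : Primrec fun n => (trNat n).map code := by
  let extend : List (List ℕ) → List ℕ := fun L =>
    if L.length = 0 then [] else
      code (if L.length % 2 = 0 then Γ'.bit0 else Γ'.bit1) :: L.getD (L.length / 2) []
  have hextend : Primrec extend := by
    have len : Primrec fun L : List (List ℕ) => L.length := Primrec.list_length
    refine .ite (Primrec.eq.comp len (.const 0)) (.const _) (Primrec.list_cons.comp ?_
      ((Primrec.list_getD []).comp .id (Primrec.nat_div.comp len (.const 2))))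
    exact (Primrec.ite (Primrec.eq.comp (Primrec.nat_mod.comp len (.const 2)) (.const 0))
      (.const (code Γ'.bit0)) (.const (code Γ'.bit1))).of_eq fun L => (apply_ite code _ _ _).symm
  refine (Primrec.nat_strong_rec (fun (_ : Unit) n => (trNat n).map code)
    (g := fun _ L => some (extend L)) (Primrec.option_some.comp (hextend.comp .snd))
    fun _ n => congrArg some ?_).comp (.const ()) .id
  rcases eq_or_ne n 0 with rfl | hn
  · simp [extend]
  · have : n / 2 < n := Nat.div_lt_self (by lia) one_lt_two
    simp [extend, hn, trNat_of_ne_zero hn, this]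

lemma map_trInit_trList_singleton (code : TM2to1.Γ' K' (fun _ => Γ') → ℕ) (n : ℕ) :
    (TM2to1.trInit K'.main (trList [n])).map code =
      code (true, Function.update (fun _ => none) K'.main (some Γ'.cons)) :: ((trNat n).map fun a =>
        code (false, Function.update (fun _ => none) K'.main (some a))).reverse := by
  rw [TM2to1.trInit, show (trList [n]).reverse = Γ'.cons :: (trNat n).reverse by simp [trList],
    ← List.map_reverse]
  exact congrArg (List.cons _) List.map_map

lemma primrec_map_trInit_trList (code : TM2to1.Γ' K' (fun _ => Γ') → ℕ) :
    Primrec fun n => (TM2to1.trInit K'.main (trList [n])).map code := by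
  simp only [map_trInit_trList_singleton]
  exact Primrec.list_cons.comp (.const _) (Primrec.list_reverse.comp (primrec_map_trNat _))

instance : Finite K' :=
  .of_injective (β := Fin 4) (fun | .main => 0 | .rev => 1 | .aux => 2 | .stack => 3) fun k k' => by
    cases k <;> cases k' <;> simp

lemma TM2_eval_dom_iff [Inhabited Λ'] {c : ToPartrec.Code}
    (hdefault : (default : Λ') = trNormal c Cont'.halt) (v : List ℕ) :
    (TM2.eval tr K'.main (trList v)).Dom ↔ (c.eval v).Dom := by
  have init_eq : TM2.init K'.main (trList v) = init c v := by
    rw [TM2.init, hdefault, init]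
    congr 1
    funext k
    cases k <;> rfl
  change (StateTransition.eval (TM2.step tr) (TM2.init K'.main (trList v))).Dom ↔ _
  rw [init_eq, tr_eval]
  rfl

lemma exists_TM0_universal :
    ∃ (Γ Λ : Type) (_ : Inhabited Γ) (_ : Finite Γ) (_ : Inhabited Λ) (_ : Finite Λ)
      (M : TM0.Machine Γ Λ) (input : ℕ → List Γ),
      (∀ code : Γ → ℕ, Primrec fun n => (input n).map code) ∧ ∀ c : Nat.Partrec.Code,
        (TM0.eval M (input (Encodable.encode c))).Dom ↔ (c.eval 0).Dom := by
  classical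
  have universal : Partrec fun n : ℕ => (Denumerable.ofNat Nat.Partrec.Code n).eval 0 :=
    Nat.Partrec.Code.eval_part.comp (.ofNat _) (.const 0)
  obtain ⟨c, hc⟩ := ToPartrec.Code.exists_code (Nat.Partrec'.part_iff₁.2 universal)
  let : Inhabited Λ' := ⟨trNormal c Cont'.halt⟩
  obtain ⟨Λ, _, _, M, hM⟩ := TM0_exists_finite_states _ (Finset.finite_toSet _)
    (TM1to0.tr_supports _ (TM2to1.tr_supports tr (tr_supports c Cont'.halt)))
  refine ⟨TM2to1.Γ' K' fun _ => Γ', Λ, inferInstance,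
    inferInstanceAs (Finite (Bool × (K' → Option Γ'))), ‹_›, ‹_›, M, _,
    primrec_map_trInit_trList, fun d => ?_⟩
  have c_eval : c.eval [Encodable.encode d] = pure <$> d.eval 0 := by
    simpa only [List.Vector.head, Denumerable.ofNat_encode] using hc ⟨[Encodable.encode d], rfl⟩
  rw [hM, TM1to0.tr_eval]
  refine (TM2to1.tr_eval_dom tr K'.main _).trans ((TM2_eval_dom_iff rfl _).trans ?_)
  rw [c_eval]
  rfl

theorem not_dominoDecidable_gridGens : ¬ DominoDecidable gridGens := by
  intro h
  obtain ⟨Γ, Λ, _, _, _, _, M, input, hinput, hM⟩ := exists_TM0_universal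
  have := Fintype.ofFinite Γ
  have := Fintype.ofFinite Λ
  obtain ⟨code, hcode, h₀⟩ := exists_injective_code Γ
  have := CounterTiles.computablePred_tiles ((turingAutomaton M).spec turingInput code).tiles h
    ((hinput code).comp Primrec.encode (α := Nat.Partrec.Code))
  refine ComputablePred.halting_problem 0 (this.not.of_eq fun c => ?_)
  rw [turingAutomaton_tiles_iff M hcode h₀, not_not, hM]

end Berger

section Windows

variable {α γ G : Type*} [Group G] {s : ℕ}

/-- The patterns `w g` on the window `D` agree along the edges of the Cayley graph, if `w g d` is
read as the symbol at `g * d`. -/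
def Coherent (Sf : Fin s → G) (D : Finset G) (w : G → G → γ) : Prop :=
  ∀ g i, ∀ d ∈ D, Sf i * d ∈ D → w g (Sf i * d) = w (g * Sf i) d

variable {Sf : Fin s → G}

lemma exists_window_mem (hgen : Subgroup.closure (Set.range Sf) = ⊤) (h : G) :
    ∃ D : Finset G, h ∈ D ∧ ∀ w : G → G → γ, Coherent Sf D w → ∀ g, w g h = w (g * h) 1 := by
  classical
  induction (hgen ▸ Subgroup.mem_top h : h ∈ Subgroup.closure (Set.range Sf))
    using Subgroup.closure_induction_left with
  | one => exact ⟨{1}, by simp, fun w _ g => by rw [mul_one]⟩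
  | mul_left x hx h _ ih =>
    obtain ⟨i, rfl⟩ := hx
    obtain ⟨D, hD, hw⟩ := ih
    refine ⟨insert (Sf i * h) D, by simp, fun w coh g => ?_⟩
    rw [coh g i h (by simp [hD]) (by simp), ← mul_assoc]
    exact hw w (fun g i d hd hd' => coh g i d (by simp [hd]) (by simp [hd'])) _
  | inv_mul_cancel x hx h _ ih =>
    obtain ⟨i, rfl⟩ := hx
    obtain ⟨D, hD, hw⟩ := ih
    refine ⟨insert ((Sf i)⁻¹ * h) D, by simp, fun w coh g => ?_⟩
    have := coh (g * (Sf i)⁻¹) i ((Sf i)⁻¹ * h) (by simp) (by simp [hD])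
    rw [mul_inv_cancel_left, inv_mul_cancel_right] at this
    rw [← this, ← mul_assoc]
    exact hw w (fun g i d hd hd' => coh g i d (by simp [hd]) (by simp [hd'])) _

lemma exists_window (hgen : Subgroup.closure (Set.range Sf) = ⊤) (F : Finset G) :
    ∃ D : Finset G, F ⊆ D ∧ 1 ∈ D ∧
      ∀ w : G → G → γ, Coherent Sf D w → ∀ g, ∀ h ∈ F, w g h = w (g * h) 1 := by
  classical
  choose D mem hw using exists_window_mem (γ := γ) hgen
  have sub : ∀ {h}, h ∈ F → D h ⊆ insert 1 (F.biUnion D) := fun hF =>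
    (Finset.subset_biUnion_of_mem D hF).trans (Finset.subset_insert _ _)
  exact ⟨insert 1 (F.biUnion D), fun h hF => sub hF (mem h), Finset.mem_insert_self _ _,
    fun w coh g h hF => hw h w (fun g i d hd hd' => coh g i d (sub hF hd) (sub hF hd')) g⟩

lemma exists_window_enumeration (hgen : Subgroup.closure (Set.range Sf) = ⊤) {k : ℕ}
    (F : Fin k → G) :
    ∃ (n : ℕ) (D : Fin n → G) (j₁ : Fin n) (c : Fin k → Fin n), (∀ j, D (c j) = F j) ∧
      ∀ w : G → Fin n → γ, (∀ g i j j', D j = Sf i * D j' → w g j = w (g * Sf i) j') →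
        ∀ g j, w g (c j) = w (g * F j) j₁ := by
  classical
  obtain ⟨D, hF, one, hw⟩ := exists_window (γ := γ) hgen (Finset.univ.image F)
  let e : Fin D.card → G := fun j => D.equivFin.symm j
  have surj : ∀ d ∈ D, ∃ j, e j = d := fun d hd => ⟨D.equivFin ⟨d, hd⟩, by simp [e]⟩
  have inj : e.Injective := Subtype.val_injective.comp D.equivFin.symm.injective
  choose c hc using fun j => surj (F j) (hF (Finset.mem_image_of_mem F (Finset.mem_univ j)))
  obtain ⟨j₁, hj₁⟩ := surj 1 one
  refine ⟨D.card, e, j₁, c, hc, fun w coh g j => ?_⟩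
  have : Nonempty (Fin D.card) := ⟨j₁⟩
  have index : ∀ j, Function.invFun e (e j) = j := Function.leftInverse_invFun inj
  have := hw (fun g d => w g (Function.invFun e d)) (fun g i d hd hd' => ?_) g (F j)
    (Finset.mem_image_of_mem F (Finset.mem_univ j))
  · rwa [← hc, index, ← hj₁, index, hc] at this
  · obtain ⟨⟨j, hj⟩, ⟨j', rfl⟩⟩ := And.intro (surj _ hd') (surj _ hd)
    simpa only [← hj, index] using coh g i j j' hj

/-- A list of all functions `Fin k → γ` with values in `L`. -/
def functionList (L : List γ) : (k : ℕ) → List (Fin k → γ)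
  | 0 => [Fin.elim0]
  | k + 1 => (L ×ˢ functionList L k).map fun p => Fin.cons p.1 p.2

lemma mem_functionList {L : List γ} : ∀ {k : ℕ} {f : Fin k → γ},
    f ∈ functionList L k ↔ ∀ i, f i ∈ L
  | 0, f => by simp [functionList, eq_iff_true_of_subsingleton]
  | k + 1, f => by
    rw [functionList, List.mem_map, Fin.forall_fin_succ]
    refine ⟨?_, fun h => ⟨(f 0, Fin.tail f), List.mem_product.2 ⟨h.1, mem_functionList.2 h.2⟩,
      Fin.cons_self_tail f⟩⟩
    rintro ⟨p, hp, rfl⟩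
    exact ⟨(List.mem_product.1 hp).1, mem_functionList.1 (List.mem_product.1 hp).2⟩

variable [Primcodable α] [Primcodable γ]

lemma primrec_fin_cons (k : ℕ) :
    Primrec fun p : γ × (Fin k → γ) => (Fin.cons p.1 p.2 : Fin (k + 1) → γ) := by
  have app : ∀ i, Primrec fun p : γ × (Fin k → γ) => (Fin.cons p.1 p.2 : Fin (k + 1) → γ) i :=
    Fin.cases .fst fun i => by simpa using Primrec.fin_app.comp .snd (.const i)
  exact Primrec.fin_curry.2 (Primrec.fin_curry₁.2 app).swap

lemma primrec_functionList {L : α → List γ} (hL : Primrec L) :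
    ∀ k, Primrec fun x => functionList (L x) k
  | 0 => .const _
  | k + 1 => Primrec.list_map (primrec_product hL (primrec_functionList hL k))
      ((primrec_fin_cons k).comp .snd)

lemma DominoDecidable.computablePred_exists_window (h : DominoDecidable Sf)
    (hgen : Subgroup.closure (Set.range Sf) = ⊤) {L : α → List γ} (hL : Primrec L) {k : ℕ}
    (F : Fin k → G) {R : α → (Fin k → γ) → Prop} (hR : PrimrecRel R) :
    ComputablePred fun x => ∃ a : G → γ, (∀ g, a g ∈ L x) ∧ ∀ g, R x fun j => a (g * F j) := by
  classical
  obtain ⟨n, D, j₁, c, hc, hw⟩ := exists_window_enumeration (γ := γ) hgen F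
  have restrict : Primrec fun (w : Fin n → γ) j => w (c j) :=
    Primrec.fin_curry.2 (Primrec.fin_curry₁.2 fun j => Primrec.fin_app.comp .id (.const (c j))).swap
  have hR' : PrimrecRel fun (w : Fin n → γ) x => R x fun j => w (c j) :=
    hR.comp .snd (restrict.comp .fst)
  have hcoh : PrimrecRel fun (_ : α) (t : (Fin n → γ) × Fin s × (Fin n → γ)) =>
      ∀ j j', D j = Sf t.2.1 * D j' → t.1 j = t.2.2 j' := by
    refine primrecPred_forall fun j => primrecPred_forall fun j' => primrecPred_imp
      ((primrecPred_of_finite fun i => D j = Sf i * D j').comp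
        (Primrec.fst.comp (Primrec.snd.comp .snd))) (Primrec.eq.comp ?_ ?_)
    · exact Primrec.fin_app.comp (Primrec.fst.comp .snd) (.const j)
    · exact Primrec.fin_app.comp (Primrec.snd.comp (Primrec.snd.comp .snd)) (.const j')
  refine (h.computablePred_exists (hR'.listFilter.comp (primrec_functionList hL n) .id)
    hcoh).of_eq fun x => ⟨?_, ?_⟩
  · rintro ⟨w, mem, coh⟩
    simp only [List.mem_filter, mem_functionList, decide_eq_true_eq] at mem
    refine ⟨fun g => w g j₁, fun g => (mem g).1 j₁, fun g => ?_⟩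
    simpa only [id, hw w coh] using (mem g).2
  · rintro ⟨a, ha, hR⟩
    refine ⟨fun g j => a (g * D j), fun g => ?_, fun g i j j' hj => ?_⟩
    · simpa [mem_functionList, hc, ha] using hR g
    · simp only [hj, mul_assoc]

end Windows

section Subshift

variable {G Z : Type*}

lemma exists_fin_enumeration (F : Finset G) : ∃ (k : ℕ) (D : Fin k → G), Set.range D = F :=
  ⟨F.card, fun j => F.equivFin.symm j, by
    ext g
    exact ⟨fun ⟨j, hj⟩ => hj ▸ (F.equivFin.symm j).2, fun hg => ⟨F.equivFin ⟨g, hg⟩, by simp⟩⟩⟩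

/-- The rules for the patterns `w`, on an enumerated window `D`, of a configuration of `X` with `K`
registers at each vertex: a pattern which forces `E i d (D j) i'` relates, by a triple of `Θ` with
label `d`, the register `i` at `D j₁` to the register `i'` at `D j`. -/
def RegisterRule (X : Set (G → Z)) {K l k : ℕ} (E : Fin K → Fin l → G → Fin K → Set (G → Z))
    (D : Fin k → G) (j₁ : Fin k) (Θ : List (ℕ × ℕ × ℕ)) (w : Fin k → Z × (Fin K → ℕ)) : Prop :=
  (∃ z ∈ X, ∀ j, z (D j) = (w j).1) ∧
    ∀ i d j i', (∃ z ∈ X ∩ E i d (D j) i', ∀ j, z (D j) = (w j).1) →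
      ((w j₁).2 i, (d : ℕ), (w j).2 i') ∈ Θ

lemma primrecRel_registerRule [Finite Z] [Primcodable Z] (X : Set (G → Z)) {K l k : ℕ}
    (E : Fin K → Fin l → G → Fin K → Set (G → Z)) (D : Fin k → G) (j₁ : Fin k) :
    PrimrecRel (RegisterRule X E D j₁) := by
  have symbols : Primrec fun (w : Fin k → Z × (Fin K → ℕ)) j => (w j).1 :=
    Primrec.fin_curry.2 (Primrec.fst.comp Primrec.fin_app)
  have pattern : ∀ Y : Set (G → Z), PrimrecPred
      fun p : List (ℕ × ℕ × ℕ) × (Fin k → Z × (Fin K → ℕ)) => ∃ z ∈ Y, ∀ j, z (D j) = (p.2 j).1 :=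
    fun Y => (primrecPred_of_finite fun v : Fin k → Z => ∃ z ∈ Y, ∀ j, z (D j) = v j).comp
      (symbols.comp .snd)
  have register : ∀ j i, Primrec
      fun p : List (ℕ × ℕ × ℕ) × (Fin k → Z × (Fin K → ℕ)) => (p.2 j).2 i := fun j i =>
    Primrec.fin_app.comp (Primrec.snd.comp (Primrec.fin_app.comp .snd (.const j))) (.const i)
  exact (pattern X).and <| primrecPred_forall fun i => primrecPred_forall fun d =>
    primrecPred_forall fun j => primrecPred_forall fun i' => primrecPred_imp (pattern _) <|
      primrecRel_list_mem.comp ((register j₁ i).pair ((Primrec.const _).pair (register j i'))) .fst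

variable [Group G]

/-- The configuration `z`, seen from the vertex `g`. -/
def viewFrom (g : G) (z : G → Z) : G → Z := fun h => z (g * h)

lemma viewFrom_viewFrom (g h : G) (z : G → Z) :
    viewFrom h (viewFrom g z) = viewFrom (g * h) z :=
  funext fun _ => congrArg z (mul_assoc g h _).symm

/-- `X` is the subshift of finite type defined by its patterns on the window `F`. -/
def IsSubshiftOfWindow (F : Finset G) (X : Set (G → Z)) : Prop :=
  ∀ z, z ∈ X ↔ ∀ g, ∃ z' ∈ X, Set.EqOn z' (viewFrom g z) F

lemma IsSubshiftOfWindow.viewFrom_mem {F : Finset G} {X : Set (G → Z)}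
    (hX : IsSubshiftOfWindow F X) {z : G → Z} (hz : z ∈ X) (g : G) : viewFrom g z ∈ X :=
  (hX _).2 fun h => by simpa only [viewFrom_viewFrom] using (hX z).1 hz (g * h)

variable {s : ℕ} {Sf : Fin s → G} {F : Finset G} {X : Set (G → Z)} {K l : ℕ}
  {E : Fin K → Fin l → G → Fin K → Set (G → Z)}

lemma IsSubshiftOfWindow.forall_registerRule_iff (hX : IsSubshiftOfWindow F X)
    (hE : ∀ z ∈ X, ∀ z' ∈ X, Set.EqOn z z' F → ∀ i d b i', z ∈ E i d b i' → z' ∈ E i d b i')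
    {k : ℕ} {D : Fin k → G} (hD : Set.range D = F) {j₁ : Fin k} (hj₁ : D j₁ = 1)
    (Θ : List (ℕ × ℕ × ℕ)) (z : G → Z) (t : G → Fin K → ℕ) :
    (∀ g, RegisterRule X E D j₁ Θ fun j => (z (g * D j), t (g * D j))) ↔
      z ∈ X ∧ ∀ g i d, ∀ b ∈ F, ∀ i', viewFrom g z ∈ E i d b i' →
        (t g i, (d : ℕ), t (g * b) i') ∈ Θ := by
  have agree : ∀ z' g, (∀ j, z' (D j) = z (g * D j)) ↔ Set.EqOn z' (viewFrom g z) F := by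
    intro z' g
    rw [← hD, Set.eqOn_range]
    exact funext_iff.symm
  have mem : (∀ g, ∃ z' ∈ X, Set.EqOn z' (viewFrom g z) F) ↔ z ∈ X := (hX z).symm
  simp only [RegisterRule, agree, forall_and, mem, hj₁, mul_one]
  refine and_congr_right fun hz => forall₃_congr fun g i d => ?_
  have edge : ∀ b i', (∃ z' ∈ X ∩ E i d b i', Set.EqOn z' (viewFrom g z) F) ↔
      viewFrom g z ∈ E i d b i' := fun b i' =>
    have hgz := hX.viewFrom_mem hz g
    ⟨fun ⟨z', ⟨hz', h⟩, heq⟩ => hE z' hz' _ hgz heq i d b i' h,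
      fun h => ⟨_, ⟨hgz, h⟩, Set.eqOn_refl _ _⟩⟩
  have window : ∀ P : G → Prop, (∀ b ∈ F, P b) ↔ ∀ j, P (D j) := fun P => by
    rw [← Set.forall_mem_range, hD]
    rfl
  simp only [edge, window]

theorem DominoDecidable.computablePred_exists_registers [Finite Z] (h : DominoDecidable Sf)
    (hgen : Subgroup.closure (Set.range Sf) = ⊤) (hX : IsSubshiftOfWindow F X) (one : 1 ∈ F)
    (hE : ∀ z ∈ X, ∀ z' ∈ X, Set.EqOn z z' F → ∀ i d b i', z ∈ E i d b i' → z' ∈ E i d b i') :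
    ComputablePred fun T : ℕ × List (ℕ × ℕ × ℕ) =>
      ∃ z ∈ X, ∃ t : G → Fin K → ℕ, (∀ g i, t g i < T.1) ∧
        ∀ g i d, ∀ b ∈ F, ∀ i', viewFrom g z ∈ E i d b i' →
          (t g i, (d : ℕ), t (g * b) i') ∈ T.2 := by
  obtain ⟨n, ⟨e⟩⟩ := Finite.exists_equiv_fin Z
  let : Primcodable Z := .ofEquiv _ e
  obtain ⟨k, D, hD⟩ := exists_fin_enumeration F
  obtain ⟨j₁, hj₁⟩ : 1 ∈ Set.range D := hD ▸ one
  let L : ℕ × List (ℕ × ℕ × ℕ) → List (Z × (Fin K → ℕ)) := fun T =>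
    (List.finRange n).map e.symm ×ˢ functionList (List.range T.1) K
  have hL : Primrec L := primrec_product (.const _)
    (primrec_functionList (Primrec.list_range.comp .fst) K)
  have mem_L : ∀ T c, c ∈ L T ↔ ∀ i, c.2 i < T.1 := fun T c => by
    have : ∃ i, e.symm i = c.1 := e.symm.surjective _
    rw [List.mem_product, mem_functionList]
    simpa using fun _ => this
  refine (h.computablePred_exists_window hgen hL D
    ((primrecRel_registerRule X E D j₁).comp (Primrec.snd.comp .fst) .snd).primrecRel).of_eq
      fun T => ?_
  simp only [mem_L]
  constructor
  · rintro ⟨a, ha, hR⟩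
    obtain ⟨hz, ht⟩ := (hX.forall_registerRule_iff hE hD hj₁ T.2 (fun g => (a g).1)
      fun g => (a g).2).1 hR
    exact ⟨_, hz, _, ha, ht⟩
  · rintro ⟨z, hz, t, ht, hzt⟩
    exact ⟨fun g => (z g, t g), ht, (hX.forall_registerRule_iff hE hD hj₁ T.2 z t).2 ⟨hz, hzt⟩⟩

end Subshift

section Compass

/-- The four unit steps of the grid, over the ring `R`. -/
def unitSteps (R : Type*) [Ring R] [DecidableEq R] : Finset (R × R) :=
  {(1, 0), (-1, 0), (0, 1), (0, -1)}

lemma gridGraph_adj {u v : ℤ × ℤ} : gridGraph.Adj u v ↔ v - u ∈ unitSteps ℤ := by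
  simp only [gridGraph, SimpleGraph.fromRel_adj, unitSteps, Finset.mem_insert,
    Finset.mem_singleton, Prod.ext_iff, Prod.fst_sub, Prod.snd_sub, ne_eq]
  omega

/-- A compass assigns to the vertices phases in `(ℤ/3)²`, so that the four unit steps are the
phase differences between a vertex and its neighbours, each occurring exactly once. -/
def IsCompass {V : Type*} (Γ : SimpleGraph V) (ε : V → ZMod 3 × ZMod 3) : Prop :=
  ∀ v, Set.BijOn (fun w => ε w - ε v) (Γ.neighborSet v) (unitSteps (ZMod 3))

/-- The phases of the standard compass of the grid. -/
def gridPhase (u : ℤ × ℤ) : ZMod 3 × ZMod 3 := (u.1, u.2)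

lemma gridPhase_sub (u v : ℤ × ℤ) : gridPhase u - gridPhase v = gridPhase (u - v) := by
  simp [gridPhase]

lemma bijOn_gridPhase_unitSteps : Set.BijOn gridPhase (unitSteps ℤ) (unitSteps (ZMod 3)) := by
  refine ⟨?_, ?_, ?_⟩
  · change ∀ u ∈ unitSteps ℤ, gridPhase u ∈ unitSteps (ZMod 3)
    decide
  · change ∀ u ∈ unitSteps ℤ, ∀ v ∈ unitSteps ℤ, gridPhase u = gridPhase v → u = v
    decide
  · change ∀ δ ∈ unitSteps (ZMod 3), ∃ u ∈ unitSteps ℤ, gridPhase u = δ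
    decide

lemma isCompass_gridPhase : IsCompass gridGraph gridPhase := by
  intro u
  simp only [gridPhase_sub]
  refine bijOn_gridPhase_unitSteps.comp ⟨fun v hv => gridGraph_adj.1 hv,
    fun v _ w _ h => sub_left_injective h, fun δ hδ => ⟨δ + u, ?_, add_sub_cancel_right δ u⟩⟩
  rw [SimpleGraph.mem_neighborSet, gridGraph_adj, add_sub_cancel_right]
  exact hδ

namespace IsCompass

variable {V W : Type*} {Γ : SimpleGraph V} {Γ' : SimpleGraph W} {ε : V → ZMod 3 × ZMod 3}

lemma comp_iso {ε : W → ZMod 3 × ZMod 3} (hε : IsCompass Γ' ε) (e : Γ ≃g Γ') :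
    IsCompass Γ (ε ∘ e) := by
  intro v
  refine (hε (e v)).comp ⟨fun w hw => e.map_adj_iff.2 hw, e.injective.injOn, fun w hw =>
    ⟨e.symm w, ?_, e.apply_symm_apply w⟩⟩
  rwa [SimpleGraph.mem_neighborSet, ← e.map_adj_iff, e.apply_symm_apply]

lemma eq_of_adj (hε : IsCompass Γ ε) {u v w : V} (hv : Γ.Adj u v) (hw : Γ.Adj u w)
    (h : ε v = ε w) : v = w :=
  (hε u).injOn hv hw (congrArg (· - ε u) h)

lemma exists_perm (hε : IsCompass Γ ε) {δ : ZMod 3 × ZMod 3} (hδ : δ ∈ unitSteps (ZMod 3)) :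
    ∃ σ : Equiv.Perm V, ∀ u, Γ.Adj u (σ u) ∧ ε (σ u) = ε u + δ := by
  have step : ∀ δ ∈ unitSteps (ZMod 3), ∀ u, ∃ v, Γ.Adj u v ∧ ε v = ε u + δ := fun δ hδ u => by
    obtain ⟨v, hv, h⟩ := (hε u).surjOn hδ
    exact ⟨v, hv, sub_eq_iff_eq_add'.1 h⟩
  have neg_mem : ∀ δ ∈ unitSteps (ZMod 3), -δ ∈ unitSteps (ZMod 3) := by decide
  choose σ hσ using step δ hδ
  choose τ hτ using step (-δ) (neg_mem δ hδ)
  refine ⟨⟨σ, τ, fun u => ?_, fun u => ?_⟩, hσ⟩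
  · refine hε.eq_of_adj (hτ _).1 (hσ u).1.symm ?_
    rw [(hτ _).2, (hσ u).2, add_neg_cancel_right]
  · refine hε.eq_of_adj (hσ _).1 (hτ u).1.symm ?_
    rw [(hσ _).2, (hτ u).2, neg_add_cancel_right]

lemma finite_neighborSet (hε : IsCompass Γ ε) (v : V) : (Γ.neighborSet v).Finite :=
  (hε v).finite_iff_finite.2 (Finset.finite_toSet _)

lemma ncard_neighborSet (hε : IsCompass Γ ε) (v : V) : (Γ.neighborSet v).ncard = 4 := by
  rw [← (hε v).injOn.ncard_image, (hε v).image_eq, Set.ncard_coe_finset]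
  decide

end IsCompass

lemma exists_adj_of_add_ne {u v w : ℤ × ℤ} (hv : gridGraph.Adj u v) (hw : gridGraph.Adj u w)
    (h : v + w ≠ u + u) : ∃ x ≠ u, gridGraph.Adj v x ∧ gridGraph.Adj w x := by
  refine ⟨v + w - u, fun hx => h (sub_eq_iff_eq_add.1 hx), ?_, ?_⟩
  · rwa [gridGraph_adj, add_sub_assoc, add_sub_cancel_left, ← gridGraph_adj]
  · rwa [gridGraph_adj, sub_right_comm, add_sub_cancel_right, ← gridGraph_adj]

namespace IsCompass

variable {ε : ℤ × ℤ → ZMod 3 × ZMod 3} {u e n w : ℤ × ℤ}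

lemma add_eq_of_opposite (hε : IsCompass gridGraph ε) (he : gridGraph.Adj u e)
    (hw : gridGraph.Adj u w) (hεe : ε e = ε u + (1, 0)) (hεw : ε w = ε u + (-1, 0)) :
    e + w = u + u := by
  by_contra hne
  obtain ⟨x, hx, hex, hwx⟩ := exists_adj_of_add_ne he hw hne
  have phases : ∀ a ∈ unitSteps (ZMod 3), ∀ b ∈ unitSteps (ZMod 3),
      (1, 0) + a = (-1, 0) + b → (1, 0) + a = 0 := by decide
  have hxu : ε x = ε u + ((1, 0) + (ε x - ε e)) := by rw [hεe]; abel
  rw [phases _ ((hε e).mapsTo hex) _ ((hε w).mapsTo hwx) (by simp only [hεe, hεw]; abel),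
    add_zero] at hxu
  exact hx (hε.eq_of_adj hex he.symm hxu)

lemma exists_adj_of_orthogonal (hε : IsCompass gridGraph ε) (he : gridGraph.Adj u e)
    (hn : gridGraph.Adj u n) (hεe : ε e = ε u + (1, 0)) (hεn : ε n = ε u + (0, 1)) :
    ∃ x, gridGraph.Adj e x ∧ gridGraph.Adj n x ∧ ε x = ε u + (1, 1) := by
  obtain ⟨w, hw, hεw⟩ : ∃ w, gridGraph.Adj u w ∧ ε w = ε u + (-1, 0) :=
    let ⟨σ, hσ⟩ := hε.exists_perm (δ := (-1, 0)) (by decide)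
    ⟨σ u, hσ u⟩
  have hne : e + n ≠ u + u := by
    rw [← hε.add_eq_of_opposite he hw hεe hεw, Ne, add_right_inj]
    rintro rfl
    exact absurd (add_left_cancel (hεn.symm.trans hεw)) (by decide)
  obtain ⟨x, hx, hex, hnx⟩ := exists_adj_of_add_ne he hn hne
  have phases : ∀ a ∈ unitSteps (ZMod 3), ∀ b ∈ unitSteps (ZMod 3),
      (1, 0) + a = (0, 1) + b → (1, 0) + a = 0 ∨ (1, 0) + a = (1, 1) := by decide
  have hεx : ε x = ε u + ((1, 0) + (ε x - ε e)) := by rw [hεe]; abel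
  rcases phases _ ((hε e).mapsTo hex) _ ((hε n).mapsTo hnx) (by simp only [hεe, hεn]; abel)
    with h | h <;> rw [h] at hεx
  · exact absurd (hε.eq_of_adj hex he.symm (hεx.trans (add_zero _))) hx
  · exact ⟨x, hex, hnx, hεx⟩

/-- The phases of the two generators of the grid. -/
def genPhase : Fin 2 → ZMod 3 × ZMod 3 := ![(1, 0), (0, 1)]

lemma exists_grid (hε : IsCompass gridGraph ε) :
    ∃ f : Multiplicative (ℤ × ℤ) → ℤ × ℤ, ∀ g i,
      gridGraph.Adj (f g) (f (g * gridGens i)) ∧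
        ε (f (g * gridGens i)) = ε (f g) + genPhase i := by
  obtain ⟨E, hE⟩ := hε.exists_perm (δ := (1, 0)) (by decide)
  obtain ⟨N, hN⟩ := hε.exists_perm (δ := (0, 1)) (by decide)
  have comm : Commute N E := by
    ext1 u
    obtain ⟨x, hex, hnx, hεx⟩ :=
      hε.exists_adj_of_orthogonal (hE u).1 (hN u).1 (hE u).2 (hN u).2
    calc N (E u) = x := hε.eq_of_adj (hN _).1 hex <| by
          rw [(hN _).2, (hE u).2, hεx, add_assoc]; rfl
      _ = E (N u) := hε.eq_of_adj hnx (hE _).1 <| by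
          rw [(hE _).2, (hN u).2, hεx, add_assoc]; rfl
  let f : Multiplicative (ℤ × ℤ) → ℤ × ℤ := fun g => (E ^ g.toAdd.1 * N ^ g.toAdd.2) 0
  have right : ∀ g, f (g * gridGens 0) = E (f g) := fun g => by
    simp [f, gridGens, add_comm _ (1 : ℤ), zpow_add]
  have up : ∀ g, f (g * gridGens 1) = N (f g) := fun g => by
    have := (comm.zpow_right g.toAdd.1).eq
    simp only [f, gridGens, Matrix.cons_val_one, Matrix.cons_val_fin_one, toAdd_mul, toAdd_ofAdd,
      Prod.fst_add, Prod.snd_add, add_zero, add_comm _ (1 : ℤ), zpow_one_add, ← mul_assoc, ← this]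
    simp only [mul_assoc, Equiv.Perm.mul_apply]
  refine ⟨f, fun g i => ?_⟩
  match i with
  | 0 => exact right g ▸ hE (f g)
  | 1 => exact up g ▸ hN (f g)

end IsCompass

lemma eq_add_gridGens {u v : ℤ × ℤ} (h : gridGraph.Adj u v) {d : Fin 2}
    (hd : gridPhase v = gridPhase u + IsCompass.genPhase d) : v = u + (gridGens d).toAdd := by
  have adj : gridGraph.Adj u (u + (gridGens d).toAdd) := by
    rw [gridGraph_adj, add_sub_cancel_left]
    exact (by decide : ∀ d, (gridGens d).toAdd ∈ unitSteps ℤ) d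
  refine isCompass_gridPhase.eq_of_adj h adj (hd.trans (sub_eq_iff_eq_add'.1 ?_).symm)
  rw [gridPhase_sub, add_sub_cancel_left]
  exact (by decide : ∀ d, gridPhase (gridGens d).toAdd = IsCompass.genPhase d) d

end Compass

section LocallyConstant

open Filter Topology

variable {G A B : Type*} [TopologicalSpace A]

lemma exists_finset_eqOn_imp {a : G → A} {P : (G → A) → Prop} (hP : ∀ᶠ b in 𝓝 a, P b) :
    ∃ F : Finset G, ∀ b, Set.EqOn b a F → P b := by
  obtain ⟨I, hI, t, ht, hs⟩ := Filter.mem_pi.1 (nhds_pi (a := a) ▸ hP)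
  refine ⟨hI.toFinset, fun b hb => hs fun g hg => ?_⟩
  rw [hb (by simpa using hg)]
  exact mem_of_mem_nhds (ht g)

variable [DiscreteTopology A]

lemma eventually_apply_eq (a : G → A) (g : G) : ∀ᶠ b in 𝓝 a, b g = a g :=
  have h : ∀ᶠ c in 𝓝 (a g), c = a g := by simp [nhds_discrete]
  ((continuous_apply g).tendsto a).eventually h

lemma exists_window_of_locallyConstant {X : Set (G → A)} (hX : IsCompact X) {f : (G → A) → B}
    (hf : ∀ a ∈ X, ∀ᶠ b in 𝓝 a, b ∈ X → f b = f a) :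
    (f '' X).Finite ∧ ∃ F : Finset G, ∀ a ∈ X, ∀ b ∈ X, Set.EqOn a b F → f a = f b := by
  classical
  choose! F hF using fun a ha => exists_finset_eqOn_imp (hf a ha)
  obtain ⟨t, htX, hXt⟩ := hX.elim_nhds_subcover (fun a => {b | Set.EqOn b a (F a)}) fun a _ =>
    (eventually_all_finset (F a)).2 fun g _ => eventually_apply_eq a g
  have cover : ∀ a ∈ X, ∃ c ∈ t, Set.EqOn a c (F c) := fun a ha => by simpa using hXt ha
  refine ⟨(t.finite_toSet.image f).subset ?_, t.biUnion F, fun a ha b hb hab => ?_⟩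
  · rintro _ ⟨a, ha, rfl⟩
    obtain ⟨c, hc, hac⟩ := cover a ha
    exact ⟨c, hc, (hF c (htX c hc) a hac ha).symm⟩
  · obtain ⟨c, hc, hac⟩ := cover a ha
    have hbc : Set.EqOn b c (F c) := fun g hg =>
      (hab (Finset.mem_biUnion.2 ⟨c, hc, hg⟩)).symm.trans (hac hg)
    rw [hF c (htX c hc) a hac ha, hF c (htX c hc) b hbc hb]

end LocallyConstant

section Solutions

variable {G : Type*} [Group G] {s : ℕ} {Sf : Fin s → G} {m : ℕ} {Θ : List (ℕ × ℕ × ℕ)}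

lemma IsSolution.viewFrom {a : G → ℕ} (ha : IsSolution Sf m Θ a) (g : G) :
    IsSolution Sf m Θ (viewFrom g a) :=
  ⟨fun _ => ha.1 _, fun h i => by simpa only [_root_.viewFrom, mul_assoc] using ha.2 (g * h) i⟩

lemma isCompact_setOf_isSolution : IsCompact {a : G → ℕ | IsSolution Sf m Θ a} := by
  have bounded : IsCompact (Set.univ.pi fun _ : G => Set.Iio m) :=
    isCompact_univ_pi fun _ => (Set.finite_Iio m).isCompact
  have closed : IsClosed
      {a : G → ℕ | ∀ (g : G) (i : Fin s), (a g, (i : ℕ), a (g * Sf i)) ∈ Θ} := by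
    simp only [Set.ofPred_forall]
    refine isClosed_iInter fun g => isClosed_iInter fun i => ?_
    have : Continuous fun a : G → ℕ => (a g, a (g * Sf i)) := by fun_prop
    exact (isClosed_discrete {c : ℕ × ℕ | (c.1, (i : ℕ), c.2) ∈ Θ}).preimage this
  convert bounded.inter_right closed using 1
  ext a
  simp [IsSolution, Set.mem_pi]

end Solutions

section DecodedGraph

variable {G : Type*} [Group G] {s : ℕ} {Sf : Fin s → G} {mk uk : ℕ → ℕ}
  {conn : ℕ → Fin s → ℕ → ℤ → ℤ → Prop} {a : G → ℕ} {p q : G × ℤ}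

/-- Left translation of slots by `g`, which turns the slots of `viewFrom g a` into those of `a`. -/
def moveSlot (g : G) : G × ℤ ≃ G × ℤ := (Equiv.mulLeft g).prodCongr (Equiv.refl ℤ)

/-- The decoded graph as a relation between all slots. -/
def SlotAdj (Sf : Fin s → G) (mk uk : ℕ → ℕ) (conn : ℕ → Fin s → ℕ → ℤ → ℤ → Prop) (a : G → ℕ)
    (p q : G × ℤ) : Prop :=
  ∃ hp hq, (DecodedGraph Sf mk uk conn a).Adj ⟨p, hp⟩ ⟨q, hq⟩

lemma slotAdj_iff : SlotAdj Sf mk uk conn a p q ↔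
    (1 ≤ p.2 ∧ p.2 ≤ mk (a p.1)) ∧ (1 ≤ q.2 ∧ q.2 ≤ mk (a q.1)) ∧
      (DecodedAdj Sf mk uk conn a p q ∨ DecodedAdj Sf mk uk conn a q p) := by
  have ne : DecodedAdj Sf mk uk conn a p q ∨ DecodedAdj Sf mk uk conn a q p → p ≠ q := by
    rintro (h | h)
    exacts [h.1, h.1.symm]
  simp only [SlotAdj, DecodedGraph, SimpleGraph.fromRel_adj, ne_eq, Subtype.mk.injEq,
    exists_prop]
  tauto

lemma Hop.moveSlot {g : G} (h : Hop Sf mk uk conn (viewFrom g a) p q) :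
    Hop Sf mk uk conn a (moveSlot g p) (moveSlot g q) := by
  obtain ⟨⟨i, hpq, hconn⟩, hp, hq⟩ := h
  exact ⟨⟨i, (congrArg (g * ·) hpq).trans (mul_assoc g p.1 (Sf i)).symm, hconn⟩, hp, hq⟩

lemma DecodedAdj.moveSlot {g : G} (h : DecodedAdj Sf mk uk conn (viewFrom g a) p q) :
    DecodedAdj Sf mk uk conn a (moveSlot g p) (moveSlot g q) := by
  obtain ⟨hpq, hp, hq, z, hpz, hzq⟩ := h
  exact ⟨(_root_.moveSlot g).injective.ne hpq, hp, hq, _root_.moveSlot g z,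
    hpz.lift _ fun _ _ h => ⟨h.1.moveSlot, h.2⟩, hzq.moveSlot⟩

lemma SlotAdj.moveSlot {g : G} (h : SlotAdj Sf mk uk conn (viewFrom g a) p q) :
    SlotAdj Sf mk uk conn a (moveSlot g p) (moveSlot g q) := by
  rw [slotAdj_iff] at h ⊢
  exact ⟨h.1, h.2.1, h.2.2.imp DecodedAdj.moveSlot DecodedAdj.moveSlot⟩

lemma slotAdj_viewFrom {g : G} : SlotAdj Sf mk uk conn (viewFrom g a) p q ↔
    SlotAdj Sf mk uk conn a (moveSlot g p) (moveSlot g q) := by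
  refine ⟨SlotAdj.moveSlot, fun h => ?_⟩
  have back : viewFrom g⁻¹ (viewFrom g a) = a := by
    rw [viewFrom_viewFrom, mul_inv_cancel]
    exact funext fun h => congrArg a (one_mul h)
  have cancel : ∀ p, moveSlot g⁻¹ (moveSlot g p) = p :=
    fun p => Prod.ext (inv_mul_cancel_left g p.1) rfl
  rw [← back] at h
  simpa only [cancel] using h.moveSlot

open Filter Topology

lemma Hop.eventually (h : Hop Sf mk uk conn a p q) : ∀ᶠ b in 𝓝 a, Hop Sf mk uk conn b p q := by
  filter_upwards [eventually_apply_eq a p.1, eventually_apply_eq a q.1] with b hp hq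
  rwa [Hop, SlotOK, SlotOK, hp, hq]

lemma DecodedAdj.eventually (h : DecodedAdj Sf mk uk conn a p q) :
    ∀ᶠ b in 𝓝 a, DecodedAdj Sf mk uk conn b p q := by
  obtain ⟨hpq, hp, hq, z, hpz, hzq⟩ := h
  have path : ∀ᶠ b in 𝓝 a, Relation.ReflTransGen
      (fun p q => Hop Sf mk uk conn b p q ∧ q.2 ≤ 0) p z := by
    clear hzq
    induction hpz with
    | refl => exact .of_forall fun b => .refl
    | tail _ h ih => filter_upwards [ih, h.1.eventually] with b hb hb' using hb.tail ⟨hb', h.2⟩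
  filter_upwards [path, hzq.eventually] with b hb hb' using ⟨hpq, hp, hq, z, hb, hb'⟩

lemma SlotAdj.eventually (h : SlotAdj Sf mk uk conn a p q) :
    ∀ᶠ b in 𝓝 a, SlotAdj Sf mk uk conn b p q := by
  simp only [slotAdj_iff] at h ⊢
  have adj : ∀ᶠ b in 𝓝 a, DecodedAdj Sf mk uk conn b p q ∨ DecodedAdj Sf mk uk conn b q p :=
    h.2.2.elim (fun h => h.eventually.mono fun _ => .inl) fun h => h.eventually.mono fun _ => .inr
  filter_upwards [eventually_apply_eq a p.1, eventually_apply_eq a q.1, adj] with b hp hq hb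
  rw [hp, hq]
  exact ⟨h.1, h.2.1, hb⟩

lemma image_neighborSet_decodedGraph (hp : 1 ≤ p.2 ∧ p.2 ≤ mk (a p.1)) :
    Subtype.val '' (DecodedGraph Sf mk uk conn a).neighborSet ⟨p, hp⟩ =
      {q | SlotAdj Sf mk uk conn a p q} := by
  ext q
  exact ⟨fun ⟨v, hv, hvq⟩ => hvq ▸ ⟨hp, v.2, hv⟩, fun ⟨_, hq, h⟩ => ⟨⟨q, hq⟩, h, rfl⟩⟩

end DecodedGraph

section Simulation

open Filter Topology

variable {G : Type*} [Group G] {s : ℕ} {Sf : Fin s → G} {m : ℕ} {Θ : List (ℕ × ℕ × ℕ)}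
  {mk uk : ℕ → ℕ} {conn : ℕ → Fin s → ℕ → ℤ → ℤ → Prop} {a : G → ℕ} {p : G × ℤ}

lemma finite_and_ncard_slotAdj (hsim : Nonempty (gridGraph ≃g DecodedGraph Sf mk uk conn a))
    (hp : 1 ≤ p.2 ∧ p.2 ≤ mk (a p.1)) :
    {q | SlotAdj Sf mk uk conn a p q}.Finite ∧ {q | SlotAdj Sf mk uk conn a p q}.ncard = 4 := by
  obtain ⟨e⟩ := hsim
  have hε := isCompass_gridPhase.comp_iso e.symm
  rw [← image_neighborSet_decodedGraph hp, Set.ncard_image_of_injective _ Subtype.val_injective]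
  exact ⟨(hε.finite_neighborSet _).image _, hε.ncard_neighborSet _⟩

/-- The edges of the decoded graph at the slots of the vertex `1`. -/
def edgesAtOne (Sf : Fin s → G) (mk uk : ℕ → ℕ) (conn : ℕ → Fin s → ℕ → ℤ → ℤ → Prop)
    (a : G → ℕ) : Set (ℤ × G × ℤ) :=
  {r | SlotAdj Sf mk uk conn a (1, r.1) r.2}

lemma finite_edgesAtOne (hsim : Nonempty (gridGraph ≃g DecodedGraph Sf mk uk conn a)) :
    (edgesAtOne Sf mk uk conn a).Finite := by
  refine ((Set.finite_Icc 1 (mk (a 1) : ℤ)).biUnion fun i hi =>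
    (finite_and_ncard_slotAdj (p := (1, i)) hsim hi).1.image (Prod.mk i)).subset fun r hr => ?_
  exact Set.mem_biUnion (slotAdj_iff.1 hr).1 ⟨r.2, hr, rfl⟩

/- A decoded edge persists under small changes of the configuration. Conversely no edge can appear,
because every marked slot always has exactly four neighbours. -/
lemma eventually_edgesAtOne_eq
    (hsim : ∀ a, IsSolution Sf m Θ a → Nonempty (gridGraph ≃g DecodedGraph Sf mk uk conn a))
    (ha : IsSolution Sf m Θ a) : ∀ᶠ b in 𝓝 a, IsSolution Sf m Θ b →
      edgesAtOne Sf mk uk conn b = edgesAtOne Sf mk uk conn a := by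
  have persist : ∀ᶠ b in 𝓝 a, edgesAtOne Sf mk uk conn a ⊆ edgesAtOne Sf mk uk conn b :=
    (eventually_all_finite (finite_edgesAtOne (hsim a ha))).2 fun r hr => SlotAdj.eventually hr
  filter_upwards [eventually_apply_eq a 1, persist] with b hb1 hab hb
  refine hab.antisymm' fun ⟨i, q⟩ hq => ?_
  have hib : 1 ≤ i ∧ i ≤ mk (b 1) := (slotAdj_iff.1 hq).1
  have hia : 1 ≤ i ∧ i ≤ mk (a 1) := hb1 ▸ hib
  obtain ⟨-, carda⟩ := finite_and_ncard_slotAdj (p := (1, i)) (hsim a ha) hia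
  obtain ⟨finb, cardb⟩ := finite_and_ncard_slotAdj (p := (1, i)) (hsim b hb) hib
  have eq : {q | SlotAdj Sf mk uk conn a (1, i) q} = {q | SlotAdj Sf mk uk conn b (1, i) q} :=
    Set.eq_of_subset_of_ncard_le (fun q hq => hab (a := (i, q)) hq) (cardb.trans carda.symm).le finb
  exact eq.ge hq

/-- A decoding window: the pattern of a solution on `F` determines the edges of the decoded graph
at the slots of the vertex `1`, and these edges do not leave `F`. -/
structure IsDecodingWindow (Sf : Fin s → G) (m : ℕ) (Θ : List (ℕ × ℕ × ℕ)) (mk uk : ℕ → ℕ)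
    (conn : ℕ → Fin s → ℕ → ℤ → ℤ → Prop) (F : Finset G) : Prop where
  one_mem : 1 ∈ F
  gen_mem : ∀ i, Sf i ∈ F
  fst_mem : ∀ {a}, IsSolution Sf m Θ a → ∀ {i q}, SlotAdj Sf mk uk conn a (1, i) q → q.1 ∈ F
  edges_congr : ∀ {a b}, IsSolution Sf m Θ a → IsSolution Sf m Θ b → Set.EqOn a b F →
    edgesAtOne Sf mk uk conn a = edgesAtOne Sf mk uk conn b

lemma exists_decodingWindow
    (hsim : ∀ a, IsSolution Sf m Θ a → Nonempty (gridGraph ≃g DecodedGraph Sf mk uk conn a)) :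
    ∃ F, IsDecodingWindow Sf m Θ mk uk conn F := by
  classical
  obtain ⟨fin, F, hF⟩ := exists_window_of_locallyConstant isCompact_setOf_isSolution
    (f := edgesAtOne Sf mk uk conn) fun a ha => eventually_edgesAtOne_eq hsim ha
  have fin_targets : ((fun r : ℤ × G × ℤ => r.2.1) ''
      ⋃₀ (edgesAtOne Sf mk uk conn '' {a | IsSolution Sf m Θ a})).Finite := by
    refine (fin.sUnion ?_).image _
    rintro _ ⟨a, ha, rfl⟩
    exact finite_edgesAtOne (hsim a ha)
  refine ⟨insert 1 (Finset.univ.image Sf ∪ (F ∪ fin_targets.toFinset)), ?_, fun i => ?_, ?_, ?_⟩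
  · exact Finset.mem_insert_self _ _
  · simp
  · refine fun {a} ha {i q} h => Finset.mem_insert_of_mem (Finset.mem_union_right _
      (Finset.mem_union_right _ (fin_targets.mem_toFinset.2 ⟨(i, q), ?_, rfl⟩)))
    exact Set.mem_sUnion_of_mem h ⟨a, ha, rfl⟩
  · exact fun {a b} ha hb hab => hF a ha b hb fun g hg => hab (by simp [hg])

end Simulation

section Decorations

variable {G : Type*} {m K : ℕ}

/-- The register at the slot `p` of a configuration `t` with `K + 1` registers at each vertex,
where register `i` belongs to slot `i`. (The value at other slots is irrelevant.) -/
def slotValue {α : Type*} (t : G → Fin (K + 1) → α) (p : G × ℤ) : α :=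
  t p.1 (Fin.ofNat (K + 1) p.2.toNat)

lemma slotValue_natCast {α : Type*} (t : G → Fin (K + 1) → α) (g : G) (i : Fin (K + 1)) :
    slotValue t (g, (i : ℤ)) = t g i := by
  simp [slotValue]

lemma exists_register {p : G × ℤ} (h1 : 1 ≤ p.2) (hK : p.2 ≤ K) :
    ∃ g, ∃ i : Fin (K + 1), p = (g, (i : ℤ)) :=
  ⟨p.1, ⟨p.2.toNat, by omega⟩, Prod.ext rfl (Int.toNat_of_nonneg (by omega)).symm⟩

/-- The colours of a configuration decorated with a phase for each slot. -/
def baseColour (z : G → Fin m × (Fin (K + 1) → ZMod 3 × ZMod 3)) : G → ℕ := fun g => (z g).1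

/-- The phase of the slot `p` in a configuration decorated with a phase for each slot. -/
def slotPhase (z : G → Fin m × (Fin (K + 1) → ZMod 3 × ZMod 3)) (p : G × ℤ) : ZMod 3 × ZMod 3 :=
  slotValue (fun g => (z g).2) p

lemma slotPhase_congr {z z' : G → Fin m × (Fin (K + 1) → ZMod 3 × ZMod 3)} {p : G × ℤ}
    (h : z p.1 = z' p.1) : slotPhase z p = slotPhase z' p := by
  simp only [slotPhase, slotValue, h]

end Decorations

section DecoratedShift

variable {G : Type*} [Group G] {s : ℕ} {Sf : Fin s → G} {m : ℕ} {Θ : List (ℕ × ℕ × ℕ)}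
  {mk uk : ℕ → ℕ} {conn : ℕ → Fin s → ℕ → ℤ → ℤ → Prop} {K : ℕ}

/-- The defining condition of a compass on the decoded graph, at the slot `p`. -/
def IsCompassAt (Sf : Fin s → G) (mk uk : ℕ → ℕ) (conn : ℕ → Fin s → ℕ → ℤ → ℤ → Prop)
    (z : G → Fin m × (Fin (K + 1) → ZMod 3 × ZMod 3)) (p : G × ℤ) : Prop :=
  1 ≤ p.2 ∧ p.2 ≤ mk (baseColour z p.1) →
    Set.BijOn (fun q => slotPhase z q - slotPhase z p)
      {q | SlotAdj Sf mk uk conn (baseColour z) p q} (unitSteps (ZMod 3))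

/-- The solutions, decorated with phases which form a compass on the decoded graph. -/
def compassShift (Sf : Fin s → G) (m : ℕ) (Θ : List (ℕ × ℕ × ℕ)) (mk uk : ℕ → ℕ)
    (conn : ℕ → Fin s → ℕ → ℤ → ℤ → Prop) (K : ℕ) :
    Set (G → Fin m × (Fin (K + 1) → ZMod 3 × ZMod 3)) :=
  {z | IsSolution Sf m Θ (baseColour z) ∧ ∀ p, IsCompassAt Sf mk uk conn z p}

variable {z z' : G → Fin m × (Fin (K + 1) → ZMod 3 × ZMod 3)} {F : Finset G}

lemma forall_isCompassAt_iff : (∀ p, IsCompassAt Sf mk uk conn z p) ↔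
    IsCompass (DecodedGraph Sf mk uk conn (baseColour z)) fun v => slotPhase z v.1 := by
  refine Iff.trans ?_ Subtype.forall.symm
  refine forall₂_congr fun p hp => ?_
  rw [← image_neighborSet_decodedGraph hp, ← Set.bijOn_comp_iff Subtype.val_injective.injOn]
  rfl

lemma isCompassAt_viewFrom {g : G} {p : G × ℤ} :
    IsCompassAt Sf mk uk conn (viewFrom g z) p ↔ IsCompassAt Sf mk uk conn z (moveSlot g p) := by
  have preimage : {q | SlotAdj Sf mk uk conn (baseColour (viewFrom g z)) p q} =
      moveSlot g ⁻¹' {q | SlotAdj Sf mk uk conn (baseColour z) (moveSlot g p) q} :=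
    Set.ext fun q => slotAdj_viewFrom (a := baseColour z)
  rw [IsCompassAt, IsCompassAt, ← Set.image_preimage_eq {q | SlotAdj _ _ _ _ _ (moveSlot g p) q}
    (moveSlot g).surjective, ← preimage, ← Set.bijOn_comp_iff (moveSlot g).injective.injOn]
  rfl

lemma IsDecodingWindow.slotAdj_congr (hF : IsDecodingWindow Sf m Θ mk uk conn F)
    (hz : IsSolution Sf m Θ (baseColour z)) (hz' : IsSolution Sf m Θ (baseColour z'))
    (h : Set.EqOn z z' F) {i : ℤ} {q : G × ℤ} : SlotAdj Sf mk uk conn (baseColour z) (1, i) q ↔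
      SlotAdj Sf mk uk conn (baseColour z') (1, i) q :=
  Set.ext_iff.1 (hF.edges_congr hz hz' fun g hg => by rw [baseColour, baseColour, h hg]) (i, q)

lemma IsCompassAt.congr (hF : IsDecodingWindow Sf m Θ mk uk conn F)
    (hz : IsSolution Sf m Θ (baseColour z)) (hz' : IsSolution Sf m Θ (baseColour z'))
    (h : Set.EqOn z z' F) {i : ℤ} (hi : IsCompassAt Sf mk uk conn z (1, i)) :
    IsCompassAt Sf mk uk conn z' (1, i) := by
  intro hmarked
  have one : z 1 = z' 1 := h hF.one_mem
  simp only [← hF.slotAdj_congr hz hz' h, ← slotPhase_congr (p := (1, i)) one]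
  refine (hi (by rwa [baseColour, one])).congr fun q hq => ?_
  exact congrArg (· - slotPhase z (1, i)) (slotPhase_congr (h (hF.fst_mem hz hq)))

lemma isSubshiftOfWindow_compassShift (hF : IsDecodingWindow Sf m Θ mk uk conn F) :
    IsSubshiftOfWindow F (compassShift Sf m Θ mk uk conn K) := by
  refine fun z => ⟨fun ⟨hsol, hcomp⟩ g => ⟨viewFrom g z, ⟨hsol.viewFrom g, fun p =>
    isCompassAt_viewFrom.2 (hcomp _)⟩, Set.eqOn_refl _ _⟩, fun h => ?_⟩
  have hsol : IsSolution Sf m Θ (baseColour z) := by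
    refine ⟨fun g => (z g).1.2, fun g i => ?_⟩
    obtain ⟨z', hz', heq⟩ := h g
    have rule := hz'.1.2 1 i
    rw [one_mul, baseColour, baseColour, heq hF.one_mem, heq (hF.gen_mem i)] at rule
    simpa only [baseColour, viewFrom, mul_one] using rule
  refine ⟨hsol, fun ⟨g, i⟩ => ?_⟩
  obtain ⟨z', hz', heq⟩ := h g
  have compass : IsCompassAt Sf mk uk conn (viewFrom g z) (1, i) :=
    (hz'.2 (1, i)).congr hF hz'.1 (hsol.viewFrom g) heq
  simpa [moveSlot] using isCompassAt_viewFrom.1 compass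

/-- The configurations in which an edge of direction `d` leads from slot `i` of the vertex `1` to
slot `i'` of the vertex `b`. -/
def directedEdge (Sf : Fin s → G) (mk uk : ℕ → ℕ) (conn : ℕ → Fin s → ℕ → ℤ → ℤ → Prop)
    (i : Fin (K + 1)) (d : Fin 2) (b : G) (i' : Fin (K + 1)) :
    Set (G → Fin m × (Fin (K + 1) → ZMod 3 × ZMod 3)) :=
  {z | SlotAdj Sf mk uk conn (baseColour z) (1, (i : ℤ)) (b, (i' : ℤ)) ∧
    slotPhase z (b, (i' : ℤ)) = slotPhase z (1, (i : ℤ)) + IsCompass.genPhase d}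

lemma mem_directedEdge_congr (hF : IsDecodingWindow Sf m Θ mk uk conn F)
    (hz : z ∈ compassShift Sf m Θ mk uk conn K) (hz' : z' ∈ compassShift Sf m Θ mk uk conn K)
    (h : Set.EqOn z z' F) {i i' : Fin (K + 1)} {d : Fin 2} {b : G}
    (hi : z ∈ directedEdge Sf mk uk conn i d b i') : z' ∈ directedEdge Sf mk uk conn i d b i' := by
  obtain ⟨hadj, hphase⟩ := hi
  refine ⟨(hF.slotAdj_congr hz.1 hz'.1 h).1 hadj, ?_⟩
  rwa [← slotPhase_congr (h (hF.fst_mem hz.1 hadj)),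
    ← slotPhase_congr (p := (1, (i : ℤ))) (h hF.one_mem)]

lemma viewFrom_mem_directedEdge {g b : G} {i i' : Fin (K + 1)} {d : Fin 2} :
    viewFrom g z ∈ directedEdge Sf mk uk conn i d b i' ↔
      SlotAdj Sf mk uk conn (baseColour z) (g, (i : ℤ)) (g * b, (i' : ℤ)) ∧
        slotPhase z (g * b, (i' : ℤ)) = slotPhase z (g, (i : ℤ)) + IsCompass.genPhase d := by
  refine and_congr ((slotAdj_viewFrom (a := baseColour z)).trans ?_) ?_ <;>
    simp [moveSlot, slotPhase, slotValue, viewFrom]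

lemma forall_directedEdge_iff (hF : IsDecodingWindow Sf m Θ mk uk conn F)
    (hK : ∀ c < m, mk c ≤ K) (hz : z ∈ compassShift Sf m Θ mk uk conn K)
    {t : G → Fin (K + 1) → ℕ} {Θ' : List (ℕ × ℕ × ℕ)} :
    (∀ g i d, ∀ b ∈ F, ∀ i', viewFrom g z ∈ directedEdge Sf mk uk conn i d b i' →
      (t g i, (d : ℕ), t (g * b) i') ∈ Θ') ↔
    ∀ p q d, SlotAdj Sf mk uk conn (baseColour z) p q →
      slotPhase z q = slotPhase z p + IsCompass.genPhase d →
        (slotValue t p, (d : ℕ), slotValue t q) ∈ Θ' := by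
  simp only [viewFrom_mem_directedEdge]
  refine ⟨fun h p q d hadj hphase => ?_, fun h g i d b _ i' ⟨hadj, hphase⟩ => ?_⟩
  · have register : ∀ p : G × ℤ, 1 ≤ p.2 ∧ p.2 ≤ mk (baseColour z p.1) →
        ∃ g, ∃ i : Fin (K + 1), p = (g, (i : ℤ)) := fun p hp =>
      exists_register hp.1 (hp.2.trans (by exact_mod_cast hK _ (hz.1.1 p.1)))
    obtain ⟨hp, hq, -⟩ := slotAdj_iff.1 hadj
    obtain ⟨g, i, rfl⟩ := register p hp
    obtain ⟨g', i', rfl⟩ := register q hq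
    obtain ⟨b, rfl⟩ : ∃ b, g' = g * b := ⟨g⁻¹ * g', (mul_inv_cancel_left g g').symm⟩
    have hb : b ∈ F := hF.fst_mem (hz.1.viewFrom g) (i := i) (q := (b, (i' : ℤ))) <|
      slotAdj_viewFrom.2 (by simpa [moveSlot] using hadj)
    simpa only [slotValue_natCast] using h g i d b hb i' ⟨hadj, hphase⟩
  · simpa only [slotValue_natCast] using h _ _ d hadj hphase

lemma tileable_of_registers (hz : z ∈ compassShift Sf m Θ mk uk conn K)
    (e : gridGraph ≃g DecodedGraph Sf mk uk conn (baseColour z)) {m' : ℕ} {Θ' : List (ℕ × ℕ × ℕ)}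
    {t : G → Fin (K + 1) → ℕ} (ht : ∀ g i, t g i < m')
    (hΘ' : ∀ p q d, SlotAdj Sf mk uk conn (baseColour z) p q →
      slotPhase z q = slotPhase z p + IsCompass.genPhase d →
        (slotValue t p, (d : ℕ), slotValue t q) ∈ Θ') :
    Tileable gridGens m' Θ' := by
  obtain ⟨f, hf⟩ := ((forall_isCompassAt_iff.1 hz.2).comp_iso e).exists_grid
  refine ⟨fun g => slotValue t (e (f g)).1, fun g => ht _ _, fun g d => ?_⟩
  obtain ⟨hadj, hphase⟩ := hf g d
  exact hΘ' _ _ d ⟨_, _, e.map_adj_iff.2 hadj⟩ hphase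

lemma exists_registers_of_tileable (hK : ∀ c < m, mk c ≤ K) {a : G → ℕ}
    (ha : IsSolution Sf m Θ a) (e : gridGraph ≃g DecodedGraph Sf mk uk conn a) {m' : ℕ}
    {Θ' : List (ℕ × ℕ × ℕ)} (h : Tileable gridGens m' Θ') :
    ∃ z ∈ compassShift Sf m Θ mk uk conn K, ∃ t : G → Fin (K + 1) → ℕ, (∀ g i, t g i < m') ∧
      ∀ p q d, SlotAdj Sf mk uk conn (baseColour z) p q →
        slotPhase z q = slotPhase z p + IsCompass.genPhase d →
          (slotValue t p, (d : ℕ), slotValue t q) ∈ Θ' := by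
  obtain ⟨c, hc, hcΘ'⟩ := h
  let pos : G × ℤ → ℤ × ℤ := Function.extend Subtype.val e.symm 0
  have pos_apply : ∀ v, pos v.1 = e.symm v := Subtype.val_injective.extend_apply _ _
  have at_marked : ∀ {α : Type} (φ : G × ℤ → α) (p : G × ℤ), 1 ≤ p.2 ∧ p.2 ≤ mk (a p.1) →
      slotValue (fun g (i : Fin (K + 1)) => φ (g, (i : ℤ))) p = φ p := fun φ p hp => by
    obtain ⟨g, i, rfl⟩ :=
      exists_register hp.1 (hp.2.trans (by exact_mod_cast hK _ (ha.1 p.1)) : p.2 ≤ K)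
    exact slotValue_natCast _ g i
  let z : G → Fin m × (Fin (K + 1) → ZMod 3 × ZMod 3) := fun g =>
    (⟨a g, ha.1 g⟩, fun i => gridPhase (pos (g, (i : ℤ))))
  have phase : ∀ v, slotPhase z v.1 = gridPhase (e.symm v) := fun v =>
    (at_marked (gridPhase ∘ pos) v.1 v.2).trans (congrArg gridPhase (pos_apply v))
  have compass : IsCompass (DecodedGraph Sf mk uk conn a) fun v => slotPhase z v.1 := by
    simpa only [phase, Function.comp_def] using isCompass_gridPhase.comp_iso e.symm
  refine ⟨z, ⟨ha, forall_isCompassAt_iff.2 compass⟩, fun g i => c (.ofAdd (pos (g, (i : ℤ)))),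
    fun g i => hc _, fun p q d (hadj : SlotAdj Sf mk uk conn a p q) hphase => ?_⟩
  obtain ⟨hp, hq, hadj⟩ := hadj
  rw [phase ⟨p, hp⟩, phase ⟨q, hq⟩] at hphase
  rw [at_marked (fun p => c (.ofAdd (pos p))) p hp, at_marked (fun p => c (.ofAdd (pos p))) q hq,
    pos_apply ⟨p, hp⟩, pos_apply ⟨q, hq⟩, eq_add_gridGens (e.symm.map_adj_iff.2 hadj) hphase]
  exact hcΘ' _ d

end DecoratedShift

theorem DominoDecidable.gridGens_of_simulation {G : Type*} [Group G] {s m : ℕ} {Sf : Fin s → G}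
    {Θ : List (ℕ × ℕ × ℕ)} {mk uk : ℕ → ℕ} {conn : ℕ → Fin s → ℕ → ℤ → ℤ → Prop}
    (h : DominoDecidable Sf) (hgen : Subgroup.closure (Set.range Sf) = ⊤)
    (hne : ∃ a, IsSolution Sf m Θ a)
    (hsim : ∀ a, IsSolution Sf m Θ a → Nonempty (gridGraph ≃g DecodedGraph Sf mk uk conn a)) :
    DominoDecidable gridGens := by
  obtain ⟨F, hF⟩ := exists_decodingWindow hsim
  obtain ⟨a, ha⟩ := hne
  obtain ⟨e⟩ := hsim a ha
  have hK : ∀ c < m, mk c ≤ (Finset.range m).sup mk := fun c hc =>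
    Finset.le_sup (Finset.mem_range.2 hc)
  have decidable := h.computablePred_exists_registers hgen
    (isSubshiftOfWindow_compassShift (K := (Finset.range m).sup mk) hF) hF.one_mem
    (E := directedEdge Sf mk uk conn) fun z hz z' hz' heq _ _ _ _ =>
      mem_directedEdge_congr hF hz hz' heq
  obtain ⟨f, hf, hf_iff⟩ := ComputablePred.computable_iff.1 decidable
  refine ⟨f, hf, fun T => (iff_of_eq (congrFun hf_iff T)).symm.trans ⟨?_, fun hT => ?_⟩⟩
  · rintro ⟨z, hz, t, ht, hedge⟩
    obtain ⟨e⟩ := hsim _ hz.1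
    exact tileable_of_registers hz e ht ((forall_directedEdge_iff hF hK hz).1 hedge)
  · obtain ⟨z, hz, t, ht, hedge⟩ := exists_registers_of_tileable hK ha e hT
    exact ⟨z, hz, t, ht, (forall_directedEdge_iff hF hK hz).2 hedge⟩

/-- If the Cayley graph of `G` simulates the grid ℤ² — i.e. there is a
nonempty subshift of finite type on `G` each of whose configurations decodes,
via marked slots and local connecting patterns, a graph isomorphic to the
Cayley graph of ℤ² — then the domino problem on `G` is undecidable. -/
theorem domino_undecidable_of_grid_simulation {G : Type*} [Group G] {s : ℕ}
    (Sf : Fin s → G) (hgen : Subgroup.closure (Set.range Sf) = ⊤)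
    (hsim : ∃ (m : ℕ) (Θ : List (ℕ × ℕ × ℕ)) (mk uk : ℕ → ℕ)
        (conn : ℕ → Fin s → ℕ → ℤ → ℤ → Prop),
      (∃ a : G → ℕ, IsSolution Sf m Θ a) ∧
      ∀ a : G → ℕ, IsSolution Sf m Θ a →
        Nonempty (gridGraph ≃g DecodedGraph Sf mk uk conn a)) :
    ¬ DominoDecidable Sf := by
  obtain ⟨m, Θ, mk, uk, conn, hne, hgrid⟩ := hsim
  exact fun h => not_dominoDecidable_gridGens (h.gridGens_of_simulation hgen hne hgrid)
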